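/- Let Q be an ergodic CP-distribution on ℝ² and π ∈ G(2,1) with dim πQ = dim Q − κ for some κ > 0. For every ε > 0 there exist a Borel set A of measures with Q(A) > 1 − ε and n_0, l_0 ∈ ℕ such that for every n ≥ n_0 and every μ ∈ A there exists D with μ(D) > 1 − ε such that for each x ∈ D the conditional measure μ_{π^{−1}(π(x))}, viewed as a measure on ℝ, is (n, l_0, ε)-dyadic spreading. -/

import Mathlib

/-!
Write `cenK θ (μ, x)` for the measure that `μ` induces on the fibre of the projection through `x`,
translated so that `x` sits at the origin. All these measures together form one Markov kernel
(`fibK`, `cenK`), and magnification acts on them by blowing up: the centred fibre measure of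
`CPmag^[k] (μ, x)` is that of `(μ, x)`, conditioned on a window of length `≈ 2^{-k}` around the origin
and scaled by `2 ^ k` (`stepRel_iterate`).

**No atoms.** By ergodicity, the mass of the atom at the origin is almost surely `0` or almost surely
`1` (`atom_zero_or_one`). The second alternative contradicts the loss of dimension (`not_dirac`). If
the fibres are Dirac masses, then `x` is a function of `μ` and of its projection, so by a Lusin-type
argument (`unifLocConst_of_measurable`) an approximation of the projection determines the first binary
digits of `x` outside a set `Bd` of small measure (`digits_determined`). The maximal ergodic
inequality says that most orbits visit `Bd` rarely. Hence the first `n` digits of `x` are known from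
its projection at scale `2^{-n}` and from the few digits read while in `Bd`, which leave only `2^{o(n)}`
choices; the mass of an interval under the projection is then comparable with the mass of a ball, and
`dim πQ = dim Q`.

**Spreading.** When there are no atoms, the centred fibre measure of `p` gives mass less than `1/2` to
the interval of radius `2^{-l}`, except for `p` in a set of measure tending to `0` with `l`
(`tendsto_badSet`). Whenever `CPmag^[k] p` avoids this set, the centred intervals of `p` of radii
`2^{-k-l}` and `2^{1-k}` have masses differing by a factor greater than `2` (`double_of_not_bad`), and
by the maximal ergodic inequality this happens for most `k ≤ n`, for all `n` simultaneously, off a set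
of small measure (`exists_exceptional`). Fubini and Markov's inequality turn this into a statement
about most `μ` and most fibres. Finally, a translation by some `j / M` with `M` odd moves most points
away from the dyadic endpoints at most scales, so that centred intervals can be replaced by dyadic
ones (`dyadicSpreading_of_centred`).
-/

open MeasureTheory Set Filter
open scoped ENNReal Classical

noncomputable section

/-- A measure is exact dimensional with dimension `d`. -/
def ExactDim {X : Type*} [PseudoMetricSpace X] [MeasurableSpace X]
    (μ : Measure X) (d : ℝ) : Prop :=
  ∀ᵐ x ∂μ, Tendsto (fun r : ℝ => Real.log (μ (Metric.ball x r)).toReal / Real.log r)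
    (nhdsWithin 0 (Set.Ioi 0)) (nhds d)

/-- The half-open dyadic cell of generation `k` containing `x`. -/
def dcell {d : ℕ} (k : ℕ) (x : Fin d → ℝ) : Set (Fin d → ℝ) :=
  {y | ∀ i, ⌊(2 : ℝ) ^ k * y i⌋ = ⌊(2 : ℝ) ^ k * x i⌋}

/-- The homothety mapping the generation-`k` dyadic cell of `x` onto `[0,1)^d`. -/
def dscale {d : ℕ} (k : ℕ) (x : Fin d → ℝ) : (Fin d → ℝ) → (Fin d → ℝ) :=
  fun y i => (2 : ℝ) ^ k * y i - ⌊(2 : ℝ) ^ k * x i⌋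

/-- The component `μ^{D_k(x)}`: the normalized restriction of `μ` to the generation-`k` dyadic
cell of `x`, rescaled to the unit cube. -/
def component {d : ℕ} (μ : Measure (Fin d → ℝ)) (k : ℕ) (x : Fin d → ℝ) :
    Measure (Fin d → ℝ) :=
  (μ (dcell k x))⁻¹ • (μ.restrict (dcell k x)).map (dscale k x)

/-- The component `μ^{D_k(x)}` as a probability measure (with a junk value in the degenerate
case `μ(D_k(x)) ∈ {0, ∞}`). -/
def componentP {d : ℕ} (μ : Measure (Fin d → ℝ)) (k : ℕ) (x : Fin d → ℝ) :
    ProbabilityMeasure (Fin d → ℝ) :=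
  if h : IsProbabilityMeasure (component μ k x) then ⟨component μ k x, h⟩
  else ⟨Measure.dirac 0, by infer_instance⟩

/-- The σ-algebra on the space of probability measures inherited from the evaluation
σ-algebra on the space of measures. -/
instance {Ω : Type*} [MeasurableSpace Ω] : MeasurableSpace (ProbabilityMeasure Ω) :=
  inferInstanceAs (MeasurableSpace {μ : Measure Ω // IsProbabilityMeasure μ})

/-- The unit cube `[0,1)^d`. -/
def unitCube (d : ℕ) : Set (Fin d → ℝ) := {y | ∀ i, 0 ≤ y i ∧ y i < 1}

/-- The magnification operator `M(μ, x) = (μ^{D_1(x)}, S_{D_1(x)}(x))`. -/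
def CPmag {d : ℕ} :
    ProbabilityMeasure (Fin d → ℝ) × (Fin d → ℝ) →
      ProbabilityMeasure (Fin d → ℝ) × (Fin d → ℝ) :=
  fun p => (componentP (p.1 : Measure (Fin d → ℝ)) 1 p.2, dscale 1 p.2 p.2)

/-- A CP-distribution: a probability distribution on pairs (measure on the unit cube, point of
the unit cube) that is invariant under magnification and adapted (the point component is
distributed according to the measure component). -/
def IsCPDist {d : ℕ}
    (Q : Measure (ProbabilityMeasure (Fin d → ℝ) × (Fin d → ℝ))) : Prop :=
  IsProbabilityMeasure Q ∧
    (∀ᵐ p ∂Q, (p.1 : Measure (Fin d → ℝ)) (unitCube d) = 1 ∧ p.2 ∈ unitCube d) ∧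
    Q.map CPmag = Q ∧
    Q = (Q.map Prod.fst).bind fun ν => (ν : Measure (Fin d → ℝ)).map fun x => (ν, x)

/-- Ergodicity of the magnification system `(P([0,1)^d) × [0,1)^d, Q, M)`. -/
def CPErgodic {d : ℕ}
    (Q : Measure (ProbabilityMeasure (Fin d → ℝ) × (Fin d → ℝ))) : Prop :=
  ∀ S : Set (ProbabilityMeasure (Fin d → ℝ) × (Fin d → ℝ)),
    MeasurableSet S → CPmag ⁻¹' S = S → Q S = 0 ∨ Q S = 1

/-- The orthogonal projection of the plane onto the line of angle `θ`, identified with `ℝ`. -/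
def projDir (θ : ℝ) (x : Fin 2 → ℝ) : ℝ := x 0 * Real.cos θ + x 1 * Real.sin θ

/-- `cond` is a disintegration of `μ` over the projection `projDir θ`: the fiber measures are
probability measures supported on the fibers, and they integrate back to `μ`. -/
def IsDisint (μ : Measure (Fin 2 → ℝ)) (θ : ℝ) (cond : ℝ → Measure (Fin 2 → ℝ)) : Prop :=
  (∀ᵐ y ∂(μ.map (projDir θ)),
      IsProbabilityMeasure (cond y) ∧ cond y {z | projDir θ z ≠ y} = 0) ∧
    ∀ E : Set (Fin 2 → ℝ), MeasurableSet E →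
      μ E = ∫⁻ y, cond y E ∂(μ.map (projDir θ))

/-- The coordinate on the line orthogonal to the direction of angle `θ`. -/
def projPerp (θ : ℝ) (x : Fin 2 → ℝ) : ℝ := -(x 0) * Real.sin θ + x 1 * Real.cos θ

/-- The dyadic interval of generation `k` containing `x ∈ ℝ`. -/
def dcell1 (k : ℕ) (x : ℝ) : Set ℝ := {y : ℝ | ⌊(2 : ℝ) ^ k * y⌋ = ⌊(2 : ℝ) ^ k * x⌋}

/-- `η` is `(n, l, ε)`-dyadic spreading: some translate `η̃` of `η` gives mass `> 1 - ε` to the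
set of points `x` for which `η̃(D_k(x)) ≤ 2·η̃(D_{k+l}(x))` for fewer than `εn` of the scales
`1 ≤ k ≤ n`. -/
def DyadicSpreading (η : Measure ℝ) (n l : ℕ) (ε : ℝ) : Prop :=
  ∃ t : ℝ, ENNReal.ofReal (1 - ε) <
    (η.map (· + t))
      {x | (((Finset.Icc 1 n).filter fun k =>
          (η.map (· + t)) (dcell1 k x) ≤ 2 * (η.map (· + t)) (dcell1 (k + l) x)).card : ℝ) <
        ε * n}

section

open ProbabilityTheory

/-! ### The maximal ergodic inequality, and a uniform Lusin-type statement -/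

/-- The running maximum `max (0, S₁, …, S_N)` of the Birkhoff sums of `f`, defined recursively. -/
def maxBirkhoff {Ω : Type*} (T : Ω → Ω) (f : Ω → ℝ) : ℕ → Ω → ℝ
  | 0, _ => 0
  | N + 1, p => max 0 (f p + maxBirkhoff T f N (T p))

lemma maxBirkhoff_nonneg {Ω : Type*} (T : Ω → Ω) (f : Ω → ℝ) (N : ℕ) (p : Ω) :
    0 ≤ maxBirkhoff T f N p := by
  cases N <;> simp [maxBirkhoff]

lemma maxBirkhoff_mono {Ω : Type*} (T : Ω → Ω) (f : Ω → ℝ) (N : ℕ) (p : Ω) :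
    maxBirkhoff T f N p ≤ maxBirkhoff T f (N + 1) p := by
  induction N generalizing p with
  | zero => exact maxBirkhoff_nonneg T f 1 p
  | succ N ih =>
    rw [maxBirkhoff, maxBirkhoff]
    exact max_le_max le_rfl (by linarith [ih (T p)])

lemma birkhoff_le_maxBirkhoff {Ω : Type*} (T : Ω → Ω) (f : Ω → ℝ) (N : ℕ) (p : Ω) :
    ∑ k ∈ Finset.range N, f (T^[k] p) ≤ maxBirkhoff T f N p := by
  induction N generalizing p with
  | zero => simp [maxBirkhoff]
  | succ N ih =>
    rw [Finset.sum_range_succ', maxBirkhoff]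
    refine le_trans ?_ (le_max_right _ _)
    simp only [Function.iterate_succ, Function.comp, Function.iterate_zero, id]
    linarith [ih (T p)]

lemma maxBirkhoff_measurable {Ω : Type*} [MeasurableSpace Ω] {T : Ω → Ω} (hT : Measurable T)
    {f : Ω → ℝ} (hf : Measurable f) (N : ℕ) : Measurable (maxBirkhoff T f N) := by
  induction N with
  | zero => exact measurable_const
  | succ N ih => exact measurable_const.max (hf.add (ih.comp hT))

lemma maxBirkhoff_bound {Ω : Type*} {T : Ω → Ω} {f : Ω → ℝ} {C : ℝ} (hC : 0 ≤ C)
    (hf : ∀ p, f p ≤ C) (N : ℕ) (p : Ω) : maxBirkhoff T f N p ≤ N * C := by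
  induction N generalizing p with
  | zero => simp [maxBirkhoff]
  | succ N ih =>
    rw [maxBirkhoff]; push_cast
    refine max_le (by positivity) ?_
    linarith [ih (T p), hf p]

/-- The maximal ergodic inequality for the visit frequency to a set. -/
theorem maximal_ineq {Ω : Type*} [MeasurableSpace Ω] {Q : Measure Ω} [IsProbabilityMeasure Q]
    {T : Ω → Ω} (hT : MeasurePreserving T Q Q) {E : Set Ω} (hE : MeasurableSet E) {c : ℝ}
    (hc : 0 < c) :
    ENNReal.ofReal c * Q {p | ∃ n : ℕ,
      c * n < (((Finset.range n).filter fun k => T^[k] p ∈ E).card : ℝ)} ≤ Q E := by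
  set f : Ω → ℝ := fun p => E.indicator 1 p - c with hf
  have hfm : Measurable f := (measurable_one.indicator hE).sub measurable_const
  have hf1 : ∀ p, f p ≤ 1 := fun p => by
    have : E.indicator (1 : Ω → ℝ) p ≤ 1 := by
      by_cases h : p ∈ E <;> simp [h]
    simp only [hf]; linarith
  have hcard : ∀ n p, ((((Finset.range n).filter fun k => T^[k] p ∈ E).card : ℕ) : ℝ) - c * n
      = ∑ k ∈ Finset.range n, f (T^[k] p) := by
    intro n p
    simp only [hf, Finset.sum_sub_distrib, Finset.sum_const, Finset.card_range, nsmul_eq_mul]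
    rw [Finset.card_filter]
    push_cast
    simp only [indicator, Pi.one_apply]
    ring_nf
  set V : ℕ → Set Ω := fun N => {p | 0 < maxBirkhoff T f N p} with hV
  have hVm : ∀ N, MeasurableSet (V N) := fun N =>
    measurableSet_lt measurable_const (maxBirkhoff_measurable hT.measurable hfm N)
  have hVmono : Monotone V := monotone_nat_of_le_succ fun N p hp =>
    lt_of_lt_of_le hp (maxBirkhoff_mono T f N p)
  have hint : ∀ N, Integrable (maxBirkhoff T f N) Q := fun N => by
    refine Integrable.of_bound (C := N * 1)
      (maxBirkhoff_measurable hT.measurable hfm N).aestronglyMeasurable (ae_of_all _ fun p => ?_)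
    rw [Real.norm_of_nonneg (maxBirkhoff_nonneg T f N p)]
    exact maxBirkhoff_bound zero_le_one hf1 N p
  have hind : Integrable (E.indicator (1 : Ω → ℝ)) Q := (integrable_const 1).indicator hE
  have hfi : Integrable f Q := hind.sub (integrable_const c)
  have key : ∀ N, ENNReal.ofReal c * Q (V N) ≤ Q E := by
    intro N
    have h1 : 0 ≤ ∫ p in V N, f p ∂Q := by
      have h2 : ∫ p, (maxBirkhoff T f N p - maxBirkhoff T f N (T p)) ∂Q = 0 := by
        rw [integral_sub (g := fun p => maxBirkhoff T f N (T p)) (hint N)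
          (hT.integrable_comp_of_integrable (hint N)), sub_eq_zero]
        have := integral_map (μ := Q) hT.measurable.aemeasurable
          (f := maxBirkhoff T f N) (by rw [hT.map_eq]; exact (hint N).aestronglyMeasurable)
        rw [hT.map_eq] at this
        exact this
      rw [← h2, ← integral_indicator (hVm N)]
      refine integral_mono ((hint N).sub (hT.integrable_comp_of_integrable (hint N)))
        (hfi.indicator (hVm N)) fun p => ?_
      by_cases hp : p ∈ V N
      · simp only [indicator_of_mem hp]
        cases N with
        | zero => simp [hV, maxBirkhoff] at hp
        | succ N =>
          have hp' : 0 < max 0 (f p + maxBirkhoff T f N (T p)) := hp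
          have h3 : maxBirkhoff T f (N + 1) p = f p + maxBirkhoff T f N (T p) := by
            rw [maxBirkhoff]
            rcases lt_max_iff.1 hp' with h | h
            · exact absurd h (lt_irrefl _)
            · exact max_eq_right h.le
          linarith [maxBirkhoff_mono T f N (T p)]
      · simp only [indicator_of_notMem hp]
        have : maxBirkhoff T f N p ≤ 0 := not_lt.1 hp
        linarith [maxBirkhoff_nonneg T f N (T p)]
    have h4 : ∫ p in V N, f p ∂Q = Q.real (E ∩ V N) - c * Q.real (V N) := by
      simp only [hf]
      rw [integral_sub hind.integrableOn (integrable_const c)]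
      rw [integral_indicator_one hE]
      simp [measureReal_restrict_apply hE, mul_comm]
    have h5 : c * Q.real (V N) ≤ Q.real E := by
      have := measureReal_mono (μ := Q) (inter_subset_left : E ∩ V N ⊆ E)
      linarith
    rw [← ofReal_measureReal (μ := Q) (s := V N), ← ofReal_measureReal (μ := Q) (s := E),
      ← ENNReal.ofReal_mul hc.le]
    exact ENNReal.ofReal_le_ofReal h5
  have hsub : {p | ∃ n : ℕ, c * n < (((Finset.range n).filter fun k => T^[k] p ∈ E).card : ℝ)}
      ⊆ ⋃ N, V N := by
    rintro p ⟨n, hn⟩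
    refine mem_iUnion.2 ⟨n, ?_⟩
    have := birkhoff_le_maxBirkhoff T f n p
    rw [← hcard] at this
    show 0 < maxBirkhoff T f n p
    linarith
  calc _ ≤ ENNReal.ofReal c * Q (⋃ N, V N) := by gcongr
    _ ≤ Q E := by
      rw [hVmono.measure_iUnion, ENNReal.mul_iSup]
      exact iSup_le key

/-- Sets that are, off a set of small measure, locally constant in the real variable at a uniform
scale. -/
def UnifLocConst {P : Type*} [MeasurableSpace P] (ρ : Measure (P × ℝ)) (S : Set (P × ℝ)) : Prop :=
  ∀ δ : ℝ≥0∞, 0 < δ → ∃ B : Set (P × ℝ), MeasurableSet B ∧ ρ B ≤ δ ∧ ∃ r : ℝ, 0 < r ∧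
    ∀ a y y', (a, y) ∉ B → (a, y') ∉ B → |y - y'| ≤ r → ((a, y) ∈ S ↔ (a, y') ∈ S)

lemma unifLocConst_union {P : Type*} [MeasurableSpace P] {ρ : Measure (P × ℝ)} {S : ℕ → Set (P × ℝ)}
    (h : ∀ i, UnifLocConst ρ (S i)) (N : ℕ) : UnifLocConst ρ (⋃ i < N, S i) := by
  induction N with
  | zero => intro δ _; exact ⟨∅, .empty, by simp, 1, one_pos, by simp⟩
  | succ N ih =>
    intro δ hδ
    obtain ⟨B, hB, hBδ, r, hr, H⟩ := ih (δ / 2) (ENNReal.half_pos hδ.ne')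
    obtain ⟨B', hB', hBδ', r', hr', H'⟩ := h N (δ / 2) (ENNReal.half_pos hδ.ne')
    refine ⟨B ∪ B', hB.union hB', ?_, min r r', lt_min hr hr', ?_⟩
    · calc ρ (B ∪ B') ≤ ρ B + ρ B' := measure_union_le _ _
        _ ≤ δ / 2 + δ / 2 := add_le_add hBδ hBδ'
        _ = δ := ENNReal.add_halves δ
    · intro a y y' hy hy' hyy
      have e : (⋃ i < N + 1, S i) = (⋃ i < N, S i) ∪ S N := by
        rw [biUnion_lt_succ]
      rw [e, mem_union, mem_union,
        H a y y' (fun h => hy (.inl h)) (fun h => hy' (.inl h)) (hyy.trans (min_le_left _ _)),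
        H' a y y' (fun h => hy (.inr h)) (fun h => hy' (.inr h)) (hyy.trans (min_le_right _ _))]

/-- The measurable sets satisfying `UnifLocConst` form a σ-algebra. -/
abbrev unifLocConstSpace {P : Type*} [MeasurableSpace P] (ρ : Measure (P × ℝ))
    [IsFiniteMeasure ρ] : MeasurableSpace (P × ℝ) where
  MeasurableSet' := fun S => MeasurableSet S ∧ UnifLocConst ρ S
  measurableSet_empty := ⟨.empty, fun δ _ => ⟨∅, .empty, by simp, 1, one_pos, by simp⟩⟩
  measurableSet_compl := by
    rintro S ⟨hS, h⟩
    refine ⟨hS.compl, fun δ hδ => ?_⟩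
    obtain ⟨B, hB, hBδ, r, hr, H⟩ := h δ hδ
    exact ⟨B, hB, hBδ, r, hr, fun a y y' hy hy' hyy => not_congr (H a y y' hy hy' hyy)⟩
  measurableSet_iUnion := by
    intro S h
    have hm : MeasurableSet (⋃ i, S i) := .iUnion fun i => (h i).1
    refine ⟨hm, fun δ hδ => ?_⟩
    have hd : 0 < δ / 2 := ENNReal.half_pos hδ.ne'
    -- the tail of the union has small measure
    have hlim : Tendsto (fun N : ℕ => ρ ((⋃ i, S i) \ ⋃ i < N, S i)) atTop (nhds 0) := by
      have h0 : (⋂ N : ℕ, (⋃ i, S i) \ ⋃ i < N, S i) = ∅ := by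
        ext p
        simp only [mem_iInter, Set.mem_sdiff, mem_iUnion, mem_empty_iff_false, iff_false]
        intro hp
        obtain ⟨i, hi⟩ := (hp 0).1
        exact (hp (i + 1)).2 ⟨i, Nat.lt_succ_self i, hi⟩
      rw [← measure_empty (μ := ρ), ← h0]
      refine tendsto_measure_iInter_atTop
        (fun N => (hm.diff (.biUnion (to_countable _) fun i _ => (h i).1)).nullMeasurableSet)
        ?_ ⟨0, measure_ne_top _ _⟩
      intro a b hab
      exact sdiff_subset_sdiff_right (biUnion_subset_biUnion_left fun i hi => lt_of_lt_of_le hi hab)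
    obtain ⟨N, hN⟩ := ((tendsto_order.1 hlim).2 _ hd).exists
    obtain ⟨B, hB, hBδ, r, hr, H⟩ := unifLocConst_union (fun i => (h i).2) N (δ / 2) hd
    refine ⟨B ∪ ((⋃ i, S i) \ ⋃ i < N, S i),
      hB.union (hm.diff (.biUnion (to_countable _) fun i _ => (h i).1)), ?_, r, hr, ?_⟩
    · calc _ ≤ ρ B + ρ ((⋃ i, S i) \ ⋃ i < N, S i) := measure_union_le _ _
        _ ≤ δ / 2 + δ / 2 := add_le_add hBδ hN.le
        _ = δ := ENNReal.add_halves δ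
    · intro a y y' hy hy' hyy
      have e : ∀ q : P × ℝ, q ∉ B ∪ ((⋃ i, S i) \ ⋃ i < N, S i) →
          (q ∈ ⋃ i, S i ↔ q ∈ ⋃ i < N, S i) := by
        intro q hq
        constructor
        · intro h1
          by_contra h2
          exact hq (.inr ⟨h1, h2⟩)
        · intro h1
          simp only [mem_iUnion] at h1 ⊢
          obtain ⟨i, -, hi⟩ := h1
          exact ⟨i, hi⟩
      rw [e _ hy, e _ hy']
      exact H a y y' (fun h => hy (.inl h)) (fun h => hy' (.inl h)) hyy

/-- A Lusin-type statement with a scale that is uniform in the parameter: every measurable set is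
locally constant in the real variable, at a uniform scale, off a set of small measure. -/
theorem unifLocConst_of_measurable {P : Type*} [MeasurableSpace P] (ρ : Measure (P × ℝ))
    [IsFiniteMeasure ρ] {S : Set (P × ℝ)} (hS : MeasurableSet S) : UnifLocConst ρ S := by
  have hfst : MeasurableSpace.comap Prod.fst inferInstance ≤ unifLocConstSpace ρ := by
    rintro _ ⟨U, hU, rfl⟩
    change MeasurableSet _ ∧ UnifLocConst ρ _
    exact ⟨measurable_fst hU, fun δ _ => ⟨∅, .empty, by simp, 1, one_pos, by simp⟩⟩
  have hsnd : MeasurableSpace.comap Prod.snd (borel ℝ) ≤ unifLocConstSpace ρ := by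
    rw [borel_eq_generateFrom_Iio, MeasurableSpace.comap_generateFrom]
    refine MeasurableSpace.generateFrom_le ?_
    rintro _ ⟨_, ⟨a, rfl⟩, rfl⟩
    change MeasurableSet _ ∧ UnifLocConst ρ _
    refine ⟨measurable_snd measurableSet_Iio, fun δ hδ => ?_⟩
    have hlim : Tendsto (fun N : ℕ => ρ (Prod.snd ⁻¹' Ioo (a - 1 / ((N : ℝ) + 1)) a))
        atTop (nhds 0) := by
      have h0 : (⋂ N : ℕ, (Prod.snd ⁻¹' Ioo (a - 1 / ((N : ℝ) + 1)) a : Set (P × ℝ))) = ∅ := by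
        ext p
        simp only [mem_iInter, mem_preimage, mem_Ioo, mem_empty_iff_false, iff_false]
        intro hp
        obtain ⟨N, hN⟩ := exists_nat_one_div_lt (sub_pos.2 (hp 0).2)
        linarith [(hp N).1]
      rw [← measure_empty (μ := ρ), ← h0]
      refine tendsto_measure_iInter_atTop
        (fun N => (measurable_snd measurableSet_Ioo).nullMeasurableSet) ?_ ⟨0, measure_ne_top _ _⟩
      intro M N hMN
      refine preimage_mono (Ioo_subset_Ioo_left ?_)
      have : (M : ℝ) ≤ N := by exact_mod_cast hMN
      have : 1 / ((N : ℝ) + 1) ≤ 1 / ((M : ℝ) + 1) := by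
        apply one_div_le_one_div_of_le <;> [positivity; linarith]
      show a - 1 / ((M : ℝ) + 1) ≤ a - 1 / ((N : ℝ) + 1)
      linarith
    obtain ⟨N, hN⟩ := ((tendsto_order.1 hlim).2 _ hδ).exists
    have hr : 0 < 1 / ((N : ℝ) + 1) := by positivity
    refine ⟨_, measurable_snd measurableSet_Ioo, hN.le, 1 / ((N : ℝ) + 1) / 2, by positivity, ?_⟩
    have aux : ∀ y y' : ℝ, y ∉ Ioo (a - 1 / ((N : ℝ) + 1)) a → |y - y'| ≤ 1 / ((N : ℝ) + 1) / 2 →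
        y < a → y' < a := by
      intro y y' hy hyy h
      have : y ≤ a - 1 / ((N : ℝ) + 1) := by
        by_contra hc
        exact hy ⟨not_le.1 hc, h⟩
      have := (abs_le.1 hyy).1
      linarith
    intro _ y y' hy hy' hyy
    exact ⟨aux y y' hy hyy, aux y' y hy' (by rwa [abs_sub_comm])⟩
  have hle : (Prod.instMeasurableSpace : MeasurableSpace (P × ℝ)) ≤ unifLocConstSpace ρ := by
    refine sup_le hfst ?_
    rw [← (inferInstance : BorelSpace ℝ).measurable_eq] at hsnd
    exact hsnd
  have h : MeasurableSet S ∧ UnifLocConst ρ S := hle S hS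
  exact h.2

/-! ### Spreading from centred intervals -/

/-- `u` is within `1/(2M)` (in units of `2^{-k}`) of an endpoint of a dyadic interval of
generation `k`. -/
def NearBdry (M k : ℕ) (u : ℝ) : Prop := ∃ a : ℤ, |2 ^ k * u - a| < 1 / (2 * (M : ℝ))

lemma measurableSet_nearBdry (M k : ℕ) (t : ℝ) : MeasurableSet {z : ℝ | NearBdry M k (z + t)} := by
  have : {z : ℝ | NearBdry M k (z + t)} =
      ⋃ a : ℤ, {z | |2 ^ k * (z + t) - a| < 1 / (2 * (M : ℝ))} := by
    ext z; simp [NearBdry]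
  rw [this]
  exact .iUnion fun a => measurableSet_lt (by fun_prop) (by fun_prop)

/-- For odd `M`, multiplication by `2^k` permutes the residues mod `M`, so at each scale at most one
of the translates `z + j/M` is close to a dyadic endpoint. -/
lemma nearBdry_unique {M : ℕ} (hM : Odd M) (k : ℕ) (z : ℝ) {i j : ℕ} (hi : i < M) (hj : j < M)
    (h1 : NearBdry M k (z + i / M)) (h2 : NearBdry M k (z + j / M)) : i = j := by
  obtain ⟨a, ha⟩ := h1
  obtain ⟨b, hb⟩ := h2
  have hM0 : (0 : ℝ) < M := by exact_mod_cast (Nat.zero_le i).trans_lt hi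
  have h3 : |(2 ^ k * ((i : ℝ) - j)) / M - (a - b)| < 1 / M := by
    have e : (2 ^ k * ((i : ℝ) - j)) / M - (a - b)
        = (2 ^ k * (z + i / M) - a) - (2 ^ k * (z + j / M) - b) := by ring
    rw [e]
    refine (abs_sub _ _).trans_lt ?_
    have : 1 / (M : ℝ) = 1 / (2 * (M : ℝ)) + 1 / (2 * (M : ℝ)) := by field_simp; norm_num
    linarith
  have h4 : |((2 ^ k * ((i : ℤ) - j) - M * (a - b) : ℤ) : ℝ)| < 1 := by
    have e : ((2 ^ k * ((i : ℤ) - j) - M * (a - b) : ℤ) : ℝ)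
        = M * ((2 ^ k * ((i : ℝ) - j)) / M - (a - b)) := by push_cast; field_simp
    rw [e, abs_mul, abs_of_pos hM0]
    calc _ < (M : ℝ) * (1 / M) := by gcongr
      _ = 1 := by field_simp
  have h5 : (2 ^ k * ((i : ℤ) - j) - M * (a - b) : ℤ) = 0 := by
    rw [← Int.abs_lt_one_iff]; exact_mod_cast h4
  have h6 : (M : ℤ) ∣ 2 ^ k * ((i : ℤ) - j) := ⟨a - b, by linarith⟩
  have hcop : IsCoprime (M : ℤ) (2 ^ k) := by
    apply IsCoprime.pow_right
    exact Nat.isCoprime_iff_coprime.2 hM.coprime_two_right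
  have h7 := hcop.dvd_of_dvd_mul_left h6
  have h8 : (i : ℤ) - j = 0 := by
    refine Int.eq_zero_of_abs_lt_dvd h7 ?_
    rw [abs_lt]; omega
  omega

/-- Some translate of `η` is, for most points, far from dyadic endpoints at most scales. -/
lemma exists_translate {M : ℕ} (hM : Odd M) {ε : ℝ} (hε : 0 < ε) (hMε : 1 / ε ^ 2 < M)
    (η : Measure ℝ) [IsProbabilityMeasure η] {n : ℕ} (hn : 1 ≤ n) :
    ∃ t : ℝ, η {z | ε * n ≤ (((Finset.Icc 1 n).filter fun k => NearBdry M k (z + t)).card : ℝ)}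
      < ENNReal.ofReal ε := by
  set N : ℕ → ℝ → ℝ := fun j z =>
    (((Finset.Icc 1 n).filter fun k => NearBdry M k (z + j / M)).card : ℝ) with hN
  set U : ℕ → Set ℝ := fun j => {z | ε * n ≤ N j z} with hU
  have hn0 : (0 : ℝ) < n := by exact_mod_cast hn
  have hUm : ∀ j, MeasurableSet (U j) := by
    intro j
    refine measurableSet_le measurable_const ?_
    simp only [hN, Finset.card_filter]
    push_cast
    refine Finset.measurable_sum _ fun k _ => ?_
    exact Measurable.ite (measurableSet_nearBdry M k _) measurable_const measurable_const
  have hsum : ∀ z, ∑ j ∈ Finset.range M, N j z ≤ n := by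
    intro z
    simp only [hN, Finset.card_filter]
    push_cast
    rw [Finset.sum_comm]
    calc _ ≤ ∑ k ∈ Finset.Icc 1 n, (1 : ℝ) := by
          refine Finset.sum_le_sum fun k _ => ?_
          rw [← Nat.cast_one, ← Nat.cast_zero]
          simp only [← Nat.cast_ite]
          rw [← Nat.cast_sum, ← Finset.card_filter]
          norm_cast
          refine Finset.card_le_one.2 fun i hi j hj => ?_
          simp only [Finset.mem_filter, Finset.mem_range] at hi hj
          exact nearBdry_unique hM k z hi.1 hj.1 hi.2 hj.2
      _ = n := by simp
  by_contra! hcon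
  have h1 : ∀ j ∈ Finset.range M, ε ≤ ∫ z, (U j).indicator 1 z ∂η := by
    intro j _
    rw [integral_indicator_one (hUm j)]
    have := hcon (j / M)
    rw [measureReal_def]
    exact (ENNReal.ofReal_le_iff_le_toReal (measure_ne_top _ _)).1 this
  have hi : ∀ j ∈ Finset.range M, Integrable ((U j).indicator (1 : ℝ → ℝ)) η := fun j _ =>
    (integrable_const 1).indicator (hUm j)
  have h2 : (M : ℝ) * ε ≤ ∫ z, ∑ j ∈ Finset.range M, (U j).indicator 1 z ∂η := by
    rw [integral_finsetSum _ hi]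
    simpa using Finset.sum_le_sum h1
  have h3 : ∫ z, ∑ j ∈ Finset.range M, (U j).indicator (1 : ℝ → ℝ) z ∂η ≤ ∫ z, 1 / ε ∂η := by
    refine integral_mono (integrable_finsetSum _ hi) (integrable_const _) fun z => ?_
    rw [le_div_iff₀ hε]
    have : (∑ j ∈ Finset.range M, (U j).indicator (1 : ℝ → ℝ) z) * ε * n ≤ 1 * n := by
      rw [Finset.sum_mul, Finset.sum_mul, one_mul]
      refine (Finset.sum_le_sum fun j _ => ?_).trans (hsum z)
      by_cases hz : z ∈ U j
      · have hz2 : ε * n ≤ N j z := hz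
        simpa [hz] using hz2
      · simp [hz, hN]
    exact le_of_mul_le_mul_right this hn0
  simp at h3
  have h4 : (M : ℝ) ≤ 1 / ε ^ 2 := by
    rw [le_div_iff₀ (by positivity)]
    have h5 : (M : ℝ) * ε ≤ ε⁻¹ := h2.trans h3
    calc (M : ℝ) * ε ^ 2 = M * ε * ε := by ring
      _ ≤ ε⁻¹ * ε := by gcongr
      _ = 1 := by field_simp
  linarith

lemma ofReal_lt_measure_compl {X : Type*} [MeasurableSpace X] {η : Measure X}
    [IsProbabilityMeasure η] {S : Set X} {ε : ℝ} (hε1 : ε ≤ 1) (hS : η S < ENNReal.ofReal ε) :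
    ENNReal.ofReal (1 - ε) < η Sᶜ := by
  have hε : 0 < ε := ENNReal.ofReal_pos.1 (lt_of_le_of_lt bot_le hS)
  have h1 : 1 ≤ η Sᶜ + η S := by
    rw [← measure_univ (μ := η), ← compl_union_self S]
    exact measure_union_le _ _
  rw [ENNReal.ofReal_sub _ hε.le, ENNReal.ofReal_one]
  by_contra! hle
  have h : ENNReal.ofReal ε ≤ 1 := by simpa using ENNReal.ofReal_le_ofReal hε1
  have h2 : η Sᶜ + η S < 1 := by
    calc _ < (1 - ENNReal.ofReal ε) + ENNReal.ofReal ε :=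
          ENNReal.add_lt_add_of_le_of_lt (measure_ne_top _ _) hle hS
      _ = 1 := tsub_add_cancel_of_le h
  exact absurd h1 (not_le.2 h2)

lemma DyadicSpreading.mono {η : Measure ℝ} {n l : ℕ} {ε ε' : ℝ} (h : DyadicSpreading η n l ε)
    (hεε : ε ≤ ε') : DyadicSpreading η n l ε' := by
  obtain ⟨t, ht⟩ := h
  refine ⟨t, lt_of_le_of_lt (ENNReal.ofReal_le_ofReal (by linarith))
    (lt_of_lt_of_le ht (measure_mono fun x hx => ?_))⟩
  exact lt_of_lt_of_le (show _ < ε * n from hx) (by gcongr)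

/-- Spreading follows from a comparison of the masses of centred intervals: the dyadic interval of
`z + t` contains the short centred interval whenever `z + t` is far from the endpoints. -/
theorem dyadicSpreading_of_centred {ε : ℝ} (hε : 0 < ε) (hε1 : ε ≤ 1) : ∃ m : ℕ, ∀ (l n : ℕ) (η : Measure ℝ)
    [IsProbabilityMeasure η] (B : Set ℝ), 1 ≤ n → η B < ENNReal.ofReal (ε / 2) →
    (∀ z ∉ B, (((Finset.Icc 1 n).filter fun k =>
      η (Icc (z - (1 / 2) ^ (k + m)) (z + (1 / 2) ^ (k + m))) ≤
        2 * η (Icc (z - (1 / 2) ^ (k + l)) (z + (1 / 2) ^ (k + l)))).card : ℝ) < ε / 2 * n) →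
    DyadicSpreading η n l ε := by
  obtain ⟨L, hL⟩ := exists_nat_gt (1 / (ε / 2) ^ 2)
  set M := 2 * L + 1 with hM
  have hMo : Odd M := ⟨L, rfl⟩
  have hMε : 1 / (ε / 2) ^ 2 < (M : ℝ) := by rw [hM]; push_cast; nlinarith [Nat.cast_nonneg (α := ℝ) L]
  have hM0 : (0 : ℝ) < 1 / (2 * (M : ℝ)) := by rw [hM]; positivity
  obtain ⟨m, hm⟩ := exists_pow_lt_of_lt_one hM0 (by norm_num : (1 / 2 : ℝ) < 1)
  refine ⟨m, fun l n η _ B hn hB hgood => ?_⟩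
  obtain ⟨t, ht⟩ := exists_translate hMo (half_pos hε) hMε η hn
  refine ⟨t, ?_⟩
  set V := {z | ε / 2 * n ≤ (((Finset.Icc 1 n).filter fun k => NearBdry M k (z + t)).card : ℝ)}
    with hV
  have htm : Measurable fun z : ℝ => z + t := by fun_prop
  have hmeas1 : ∀ (k : ℕ) (x : ℝ), MeasurableSet (dcell1 k x) := fun k x =>
    measurableSet_eq_fun (by fun_prop) measurable_const
  refine lt_of_lt_of_le ?_ (Measure.le_map_apply htm.aemeasurable _)
  have hsub : (B ∪ V)ᶜ ⊆ (fun z : ℝ => z + t) ⁻¹' {x | (((Finset.Icc 1 n).filter fun k =>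
          (η.map (· + t)) (dcell1 k x) ≤ 2 * (η.map (· + t)) (dcell1 (k + l) x)).card : ℝ) <
        ε * n} := by
    intro z hz
    have hzB : z ∉ B := fun h => hz (.inl h)
    have hzV : z ∉ V := fun h => hz (.inr h)
    have h1 := hgood z hzB
    have h2 : (((Finset.Icc 1 n).filter fun k => NearBdry M k (z + t)).card : ℝ) < ε / 2 * n :=
      not_le.1 hzV
    rw [mem_preimage, mem_ofPred_eq]
    refine lt_of_le_of_lt ?_ ((add_lt_add h1 h2).trans_eq (by ring))
    · norm_cast
      refine (Finset.card_le_card ?_).trans (Finset.card_union_le _ _)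
      intro k hk
      rw [Finset.mem_filter, Measure.map_apply htm (hmeas1 _ _),
        Measure.map_apply htm (hmeas1 _ _)] at hk
      rw [Finset.mem_union, Finset.mem_filter, Finset.mem_filter]
      by_cases hnb : NearBdry M k (z + t)
      · exact .inr ⟨hk.1, hnb⟩
      · left
        refine ⟨hk.1, ?_⟩
        refine le_trans (measure_mono ?_) (hk.2.trans (mul_le_mul_right (measure_mono ?_) 2))
        · intro w hw
          have hnb' : ∀ a : ℤ, 1 / (2 * (M : ℝ)) ≤ |2 ^ k * (z + t) - a| := by
            intro a
            by_contra h
            exact hnb ⟨a, not_le.1 h⟩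
          have hw' : |2 ^ k * (w + t) - 2 ^ k * (z + t)| < 1 / (2 * (M : ℝ)) := by
            rw [← mul_sub, abs_mul, abs_of_pos (by positivity)]
            have : |w + t - (z + t)| ≤ (1 / 2) ^ (k + m) := by
              rw [abs_le]; constructor <;> linarith [hw.1, hw.2]
            calc (2 : ℝ) ^ k * |w + t - (z + t)| ≤ 2 ^ k * (1 / 2) ^ (k + m) := by gcongr
              _ = (1 / 2) ^ m := by
                rw [pow_add, ← mul_assoc, ← mul_pow]; norm_num
              _ < _ := hm
          show ⌊(2 : ℝ) ^ k * (w + t)⌋ = ⌊(2 : ℝ) ^ k * (z + t)⌋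
          rw [Int.floor_eq_iff]
          have f1 := Int.floor_le ((2 : ℝ) ^ k * (z + t))
          have f2 := Int.lt_floor_add_one ((2 : ℝ) ^ k * (z + t))
          have g1 := hnb' ⌊(2 : ℝ) ^ k * (z + t)⌋
          have g2 := hnb' (⌊(2 : ℝ) ^ k * (z + t)⌋ + 1)
          push_cast at g2
          rw [abs_of_nonneg (by linarith)] at g1
          rw [abs_of_nonpos (by linarith)] at g2
          rw [abs_lt] at hw'
          constructor <;> linarith
        · intro w hw
          have hw : ⌊(2 : ℝ) ^ (k + l) * (w + t)⌋ = ⌊(2 : ℝ) ^ (k + l) * (z + t)⌋ := hw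
          have f1 := Int.abs_sub_lt_one_of_floor_eq_floor hw
          rw [← mul_sub, abs_mul, abs_of_pos (by positivity)] at f1
          have f2 : |w + t - (z + t)| < (1 / 2) ^ (k + l) := by
            rw [one_div, inv_pow, ← one_div, lt_div_iff₀ (by positivity)]; linarith
          rw [abs_lt] at f2
          constructor <;> linarith
  refine lt_of_lt_of_le ?_ (measure_mono hsub)
  have hBV : η (B ∪ V) < ENNReal.ofReal ε := by
    calc η (B ∪ V) ≤ η B + η V := measure_union_le _ _
      _ < ENNReal.ofReal (ε / 2) + ENNReal.ofReal (ε / 2) := ENNReal.add_lt_add hB ht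
      _ = ENNReal.ofReal ε := by rw [← ENNReal.ofReal_add (by positivity) (by positivity)]; ring_nf
  exact ofReal_lt_measure_compl hε1 hBV

/-- Exponential Markov bound for the number of words with at most `c` nontrivial symbols: weight each
nontrivial symbol by `lam` and sum over all words. -/
lemma card_codes_le {D : Type*} [Fintype D] (n : ℕ) {lam c : ℝ} (h0 : 0 < lam) (h1 : lam ≤ 1) :
    ((Finset.univ.filter fun f : Fin n → Option D =>
      (((Finset.univ.filter fun k => f k ≠ none).card : ℕ) : ℝ) ≤ c).card : ℝ) ≤
      lam ^ (-c) * (1 + Fintype.card D * lam) ^ n := by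
  have hprod : ∀ f : Fin n → Option D, (∏ k, if f k = none then (1 : ℝ) else lam) =
      lam ^ (Finset.univ.filter fun k => f k ≠ none).card := by
    intro f
    rw [Finset.prod_ite]
    simp
  have hsum : ∑ f : Fin n → Option D, ∏ k, (if f k = none then (1 : ℝ) else lam) =
      (1 + Fintype.card D * lam) ^ n := by
    rw [← Fintype.prod_sum (fun (_ : Fin n) (o : Option D) => if o = none then (1 : ℝ) else lam)]
    simp
  rw [Finset.card_eq_sum_ones]
  push_cast
  rw [← hsum, Finset.mul_sum]
  refine (Finset.sum_le_sum (g := fun f => lam ^ (-c) * ∏ k, (if f k = none then (1 : ℝ) else lam))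
    fun f hf => ?_).trans (Finset.sum_le_sum_of_subset_of_nonneg (Finset.filter_subset _ _) ?_)
  · rw [hprod]
    have hf := (Finset.mem_filter.1 hf).2
    rw [← Real.rpow_natCast, ← Real.rpow_add h0]
    exact Real.one_le_rpow_of_pos_of_le_one_of_nonpos h0 h1 (by linarith)
  · intro f _ _
    refine mul_nonneg (by positivity) (Finset.prod_nonneg fun k _ => ?_)
    split_ifs <;> linarith

/-! ### Fibre measures as kernels -/

/-- Borel probability measures on the plane. -/
abbrev PM := ProbabilityMeasure (Fin 2 → ℝ)

/-- The plane. -/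
abbrev X2 := Fin 2 → ℝ

lemma measurable_projDir (θ : ℝ) : Measurable (projDir θ) := by
  unfold projDir; fun_prop

lemma measurable_projPerp (θ : ℝ) : Measurable (projPerp θ) := by
  unfold projPerp; fun_prop

/-- The point of the plane with rotated coordinates `(y, z)`. -/
def rotInv (θ : ℝ) (w : ℝ × ℝ) : X2 :=
  ![w.1 * Real.cos θ - w.2 * Real.sin θ, w.1 * Real.sin θ + w.2 * Real.cos θ]

lemma rotInv_proj (θ : ℝ) (x : X2) : rotInv θ (projDir θ x, projPerp θ x) = x := by
  have h := Real.sin_sq_add_cos_sq θ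
  ext i
  fin_cases i
  · simp [rotInv, projDir, projPerp]
    linear_combination (x 0) * h
  · simp [rotInv, projDir, projPerp]
    linear_combination (x 1) * h

lemma projDir_rotInv (θ : ℝ) (w : ℝ × ℝ) : projDir θ (rotInv θ w) = w.1 := by
  have h := Real.sin_sq_add_cos_sq θ
  simp [rotInv, projDir]
  linear_combination w.1 * h

lemma projPerp_rotInv (θ : ℝ) (w : ℝ × ℝ) : projPerp θ (rotInv θ w) = w.2 := by
  have h := Real.sin_sq_add_cos_sq θ
  simp [rotInv, projPerp]
  linear_combination w.2 * h

lemma measurable_rotInv (θ : ℝ) : Measurable (rotInv θ) := by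
  rw [measurable_pi_iff]
  intro i
  fin_cases i
  · simp [rotInv]; fun_prop
  · simp [rotInv]; fun_prop

/-! ### Measurability of the magnification operator -/

/-- First-generation digits of a point. -/
def digits (x : X2) : Fin 2 → ℤ := fun i => ⌊(2 : ℝ) ^ 1 * x i⌋

/-- The first-generation dyadic cell with given digits. -/
def cellC (c : Fin 2 → ℤ) : Set X2 := {y | ∀ i, ⌊(2 : ℝ) ^ 1 * y i⌋ = c i}

/-- The homothety mapping the cell with digits `c` onto the unit square. -/
def scaleC (c : Fin 2 → ℤ) : X2 → X2 := fun y i => (2 : ℝ) ^ 1 * y i - c i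

/-- The normalized, rescaled restriction of `μ` to the cell with digits `c`. -/
def compC (c : Fin 2 → ℤ) (μ : Measure X2) : Measure X2 :=
  (μ (cellC c))⁻¹ • (μ.restrict (cellC c)).map (scaleC c)

lemma component_eq (μ : Measure X2) (x : X2) : component μ 1 x = compC (digits x) μ := rfl

lemma measurable_digits : Measurable digits := by
  unfold digits; fun_prop

lemma measurableSet_cellC (c : Fin 2 → ℤ) : MeasurableSet (cellC c) := by
  have : cellC c = digits ⁻¹' {c} := by
    ext y; simp [cellC, digits, funext_iff]
  rw [this]; exact measurable_digits (measurableSet_singleton c)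

lemma measurable_scaleC (c : Fin 2 → ℤ) : Measurable (scaleC c) := by
  unfold scaleC; fun_prop

lemma compC_apply (c : Fin 2 → ℤ) (μ : Measure X2) {A : Set X2} (hA : MeasurableSet A) :
    compC c μ A = (μ (cellC c))⁻¹ * μ (cellC c ∩ scaleC c ⁻¹' A) := by
  simp only [compC, Measure.smul_apply, smul_eq_mul]
  rw [Measure.map_apply (measurable_scaleC c) hA,
    Measure.restrict_apply (measurable_scaleC c hA), inter_comm]

lemma measurable_coePM : Measurable (fun μ : PM => (μ : Measure X2)) := measurable_subtype_coe

lemma measurable_apply_PM {A : Set X2} (hA : MeasurableSet A) :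
    Measurable (fun μ : PM => (μ : Measure X2) A) :=
  (Measure.measurable_coe hA).comp measurable_coePM

lemma measurable_compC (c : Fin 2 → ℤ) : Measurable (fun μ : PM => compC c (μ : Measure X2)) := by
  refine Measure.measurable_of_measurable_coe _ fun A hA => ?_
  simp_rw [compC_apply c _ hA]
  exact (measurable_apply_PM (measurableSet_cellC c)).inv.mul
    (measurable_apply_PM ((measurableSet_cellC c).inter (measurable_scaleC c hA)))

lemma measurable_compC_prod :
    Measurable (fun p : PM × (Fin 2 → ℤ) => compC p.2 (p.1 : Measure X2)) :=
  measurable_from_prod_countable_left fun c => measurable_compC c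

lemma measurable_component : Measurable (fun p : PM × X2 => component (p.1 : Measure X2) 1 p.2) := by
  have h2 : Measurable fun p : PM × X2 => (p.1, digits p.2) :=
    measurable_fst.prodMk (measurable_digits.comp measurable_snd)
  have h3 := measurable_compC_prod.comp h2
  simp only [Function.comp_def, ← component_eq] at h3
  exact h3

lemma measurable_componentP : Measurable (fun p : PM × X2 => componentP (p.1 : Measure X2) 1 p.2) := by
  suffices h : Measurable fun p : PM × X2 => (componentP (p.1 : Measure X2) 1 p.2 : Measure X2) from
    measurable_comap_iff.2 h
  have : (fun p : PM × X2 => (componentP (p.1 : Measure X2) 1 p.2 : Measure X2)) =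
      fun p => if component (p.1 : Measure X2) 1 p.2 univ = 1 then component (p.1 : Measure X2) 1 p.2
        else Measure.dirac 0 := by
    funext p
    simp only [componentP]
    by_cases h : component (p.1 : Measure X2) 1 p.2 univ = 1
    · have h' : IsProbabilityMeasure (component (p.1 : Measure X2) 1 p.2) := ⟨h⟩
      simp [h']
    · have h' : ¬ IsProbabilityMeasure (component (p.1 : Measure X2) 1 p.2) := fun h2 => h h2.1
      simp [h, h']
  rw [this]
  refine Measurable.ite ?_ measurable_component measurable_const
  exact (Measure.measurable_coe MeasurableSet.univ).comp measurable_component (measurableSet_singleton 1)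

lemma measurable_CPmag : Measurable (CPmag : PM × X2 → PM × X2) := by
  refine measurable_componentP.prodMk ?_
  rw [measurable_pi_iff]
  intro i
  simp only [dscale]
  fun_prop

lemma measurePreserving_CPmag {Q : Measure (PM × X2)} (hQ : IsCPDist Q) :
    MeasurePreserving CPmag Q Q := ⟨measurable_CPmag, hQ.2.2.1⟩

lemma measurableSet_unitCube : MeasurableSet (unitCube 2) := by
  have : unitCube 2 = ⋂ i : Fin 2, {y : X2 | 0 ≤ y i ∧ y i < 1} := by
    ext y; simp [unitCube]
  rw [this]
  refine MeasurableSet.iInter fun i => ?_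
  exact (measurableSet_le measurable_const (measurable_pi_apply i)).inter
    (measurableSet_lt (measurable_pi_apply i) measurable_const)

lemma CPmag_mem_unitCube (p : PM × X2) : (CPmag p).2 ∈ unitCube 2 := by
  intro i
  simp only [CPmag, dscale]
  exact ⟨by linarith [Int.floor_le ((2 : ℝ) ^ 1 * p.2 i)],
    by linarith [Int.lt_floor_add_one ((2 : ℝ) ^ 1 * p.2 i)]⟩

lemma coe_componentP {μ : PM} {x : X2} (h : (μ : Measure X2) (cellC (digits x)) ≠ 0) :
    (componentP (μ : Measure X2) 1 x : Measure X2) = compC (digits x) (μ : Measure X2) := by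
  have h' : IsProbabilityMeasure (component (μ : Measure X2) 1 x) := by
    constructor
    rw [component_eq, compC_apply _ _ MeasurableSet.univ]
    simpa using ENNReal.inv_mul_cancel h (measure_ne_top _ _)
  have h2 : componentP (μ : Measure X2) 1 x = ⟨component (μ : Measure X2) 1 x, h'⟩ := dif_pos h'
  rw [h2]
  rfl

/-! ### The tautological kernel and its disintegration -/

/-- The tautological kernel sending a probability measure to itself. -/
def tautK : Kernel PM X2 := ⟨fun μ => (μ : Measure X2), measurable_coePM⟩

@[simp] lemma tautK_apply (μ : PM) : tautK μ = (μ : Measure X2) := rfl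

instance : IsMarkovKernel tautK := ⟨fun μ => by rw [tautK_apply]; infer_instance⟩

/-- Adaptedness, in the language of kernels. -/
lemma cp_eq_compProd {Q : Measure (PM × X2)} (hQ : IsCPDist Q) :
    Q = (Q.map Prod.fst) ⊗ₘ tautK := by
  have := hQ.1
  have hm : Measurable fun ν : PM => (ν : Measure X2).map fun x => (ν, x) := by
    refine Measure.measurable_of_measurable_coe _ fun A hA => ?_
    have : (fun ν : PM => ((ν : Measure X2).map fun x => (ν, x)) A)
        = fun ν : PM => tautK ν (Prod.mk ν ⁻¹' A) := by
      funext ν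
      rw [Measure.map_apply measurable_prodMk_left hA]; rfl
    rw [this]
    exact Kernel.measurable_kernel_prodMk_left hA
  have : IsProbabilityMeasure (Q.map Prod.fst) := Measure.isProbabilityMeasure_map measurable_fst.aemeasurable
  conv_lhs => rw [hQ.2.2.2]
  ext A hA
  rw [Measure.bind_apply hA hm.aemeasurable, Measure.compProd_apply hA]
  refine lintegral_congr fun ν => ?_
  rw [Measure.map_apply measurable_prodMk_left hA]; rfl

/-- The kernel of measures written in rotated coordinates. -/
def rotK (θ : ℝ) : Kernel PM (ℝ × ℝ) := tautK.map fun x => (projDir θ x, projPerp θ x)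

lemma measurable_rot (θ : ℝ) : Measurable fun x : X2 => (projDir θ x, projPerp θ x) :=
  (measurable_projDir θ).prodMk (measurable_projPerp θ)

instance (θ : ℝ) : IsMarkovKernel (rotK θ) := Kernel.IsMarkovKernel.map _ (measurable_rot θ)

/-- The fibre measures of all measures simultaneously, in the coordinate orthogonal to `θ`. -/
def fibK (θ : ℝ) : Kernel (PM × ℝ) ℝ := (rotK θ).condKernel

instance (θ : ℝ) : IsMarkovKernel (fibK θ) := by unfold fibK; infer_instance

lemma rotK_fst (θ : ℝ) (μ : PM) : (rotK θ).fst μ = (μ : Measure X2).map (projDir θ) := by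
  rw [Kernel.fst_apply, rotK, Kernel.map_apply _ (measurable_rot θ),
    Measure.map_map measurable_fst (measurable_rot θ)]
  rfl

lemma fibK_lintegral (θ : ℝ) (μ : PM) {S : Set (ℝ × ℝ)} (hS : MeasurableSet S) :
    ∫⁻ y, fibK θ (μ, y) {z | (y, z) ∈ S} ∂((μ : Measure X2).map (projDir θ)) =
      (μ : Measure X2) {x | (projDir θ x, projPerp θ x) ∈ S} := by
  have h := ProbabilityTheory.lintegral_condKernel_mem (κ := rotK θ) μ hS
  rw [rotK_fst] at h
  have h2 : rotK θ μ S = (μ : Measure X2) {x | (projDir θ x, projPerp θ x) ∈ S} := by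
    rw [rotK, Kernel.map_apply _ (measurable_rot θ), Measure.map_apply (measurable_rot θ) hS]; rfl
  rw [h2] at h
  exact h

lemma measurable_fibK_slice (θ : ℝ) {S : Set ((PM × ℝ) × ℝ)} (hS : MeasurableSet S) :
    Measurable fun a : PM × ℝ => fibK θ a {z | (a, z) ∈ S} :=
  Kernel.measurable_kernel_prodMk_left hS

lemma fibK_lintegral' (θ : ℝ) (μ : PM) {S : Set (ℝ × ℝ)} (hS : MeasurableSet S) :
    ∫⁻ x, fibK θ (μ, projDir θ x) {z | (projDir θ x, z) ∈ S} ∂(μ : Measure X2) =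
      (μ : Measure X2) {x | (projDir θ x, projPerp θ x) ∈ S} := by
  rw [← fibK_lintegral θ μ hS, lintegral_map _ (measurable_projDir θ)]
  have hS' : MeasurableSet {w : (PM × ℝ) × ℝ | (w.1.2, w.2) ∈ S} :=
    ((measurable_snd.comp measurable_fst).prodMk measurable_snd) hS
  exact (measurable_fibK_slice θ hS').comp measurable_prodMk_left

/-- The fibre measure through the point `x`, recentred so that `x` sits at the origin. -/
def cenK (θ : ℝ) : Kernel (PM × X2) ℝ where
  toFun p := (fibK θ (p.1, projDir θ p.2)).map (· - projPerp θ p.2)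
  measurable' := by
    refine Measure.measurable_of_measurable_coe _ fun A hA => ?_
    have hS : MeasurableSet {w : (PM × X2) × ℝ | w.2 - projPerp θ w.1.2 ∈ A} := by
      have : Measurable fun w : (PM × X2) × ℝ => w.2 - projPerp θ w.1.2 :=
        measurable_snd.sub ((measurable_projPerp θ).comp (measurable_snd.comp measurable_fst))
      exact this hA
    have hf : Measurable fun p : PM × X2 => (p.1, projDir θ p.2) :=
      measurable_fst.prodMk ((measurable_projDir θ).comp measurable_snd)
    have := Kernel.measurable_kernel_prodMk_left (κ := (fibK θ).comap _ hf) hS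
    convert this using 2 with p
    rw [Measure.map_apply (by fun_prop) hA]
    rfl

lemma cenK_apply (θ : ℝ) (p : PM × X2) {A : Set ℝ} (hA : MeasurableSet A) :
    cenK θ p A = fibK θ (p.1, projDir θ p.2) {z | z - projPerp θ p.2 ∈ A} := by
  change ((fibK θ (p.1, projDir θ p.2)).map (· - projPerp θ p.2)) A = _
  rw [Measure.map_apply (by fun_prop) hA]; rfl

instance (θ : ℝ) : IsMarkovKernel (cenK θ) := by
  constructor
  intro p
  constructor
  rw [cenK_apply θ p MeasurableSet.univ]; simp

lemma isDisint_fibK (θ : ℝ) (μ : PM) :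
    IsDisint (μ : Measure X2) θ fun y => (fibK θ (μ, y)).map fun z => rotInv θ (y, z) := by
  have hm : ∀ y : ℝ, Measurable fun z : ℝ => rotInv θ (y, z) := fun y =>
    (measurable_rotInv θ).comp measurable_prodMk_left
  refine ⟨Eventually.of_forall fun y => ⟨Measure.isProbabilityMeasure_map (hm y).aemeasurable, ?_⟩,
    fun E hE => ?_⟩
  · rw [Measure.map_apply (hm y)]
    · simp [projDir_rotInv]
    · exact (measurable_projDir θ (measurableSet_singleton y)).compl
  · have := fibK_lintegral θ μ (measurable_rotInv θ hE)
    simp only [mem_preimage, rotInv_proj, ] at this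
    rw [show {x | x ∈ E} = E from rfl] at this
    rw [← this]
    refine lintegral_congr fun y => ?_
    rw [Measure.map_apply (hm y) hE]; rfl

lemma map_projPerp_fib (θ : ℝ) (μ : PM) (y : ℝ) :
    ((fibK θ (μ, y)).map fun z => rotInv θ (y, z)).map (projPerp θ) = fibK θ (μ, y) := by
  have hm : Measurable fun z : ℝ => rotInv θ (y, z) := (measurable_rotInv θ).comp measurable_prodMk_left
  rw [Measure.map_map (measurable_projPerp θ) hm]
  have : (projPerp θ ∘ fun z => rotInv θ (y, z)) = id := by
    funext z; simp [projPerp_rotInv]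
  rw [this, Measure.map_id]

/-! ### Fibres of a component -/

lemma ae_of_ae_ae {Q : Measure (PM × X2)} (hQ : IsCPDist Q) {R : PM × X2 → Prop}
    (hR : MeasurableSet {p | R p}) (h : ∀ᵐ p ∂Q, ∀ᵐ x ∂(p.1 : Measure X2), R (p.1, x)) :
    ∀ᵐ p ∂Q, R p := by
  have := hQ.1
  have : IsProbabilityMeasure (Q.map Prod.fst) := Measure.isProbabilityMeasure_map measurable_fst.aemeasurable
  rw [cp_eq_compProd hQ]
  refine Measure.ae_compProd_of_ae_ae hR ?_
  rw [ae_map_iff measurable_fst.aemeasurable]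
  · exact h
  · have : {μ : PM | ∀ᵐ x ∂tautK μ, R (μ, x)} = {μ | tautK μ (Prod.mk μ ⁻¹' {p | R p}ᶜ) = 0} := by
      ext μ; rfl
    rw [this]
    exact Kernel.measurable_kernel_prodMk_left hR.compl (measurableSet_singleton 0)

lemma ae_ae_of_ae' {Q : Measure (PM × X2)} (hQ : IsCPDist Q) {R : PM × X2 → Prop}
    (h : ∀ᵐ p ∂Q, R p) : ∀ᵐ p ∂Q, ∀ᵐ x ∂(p.1 : Measure X2), R (p.1, x) := by
  have := hQ.1
  have : IsProbabilityMeasure (Q.map Prod.fst) := Measure.isProbabilityMeasure_map measurable_fst.aemeasurable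
  rw [cp_eq_compProd hQ] at h
  exact ae_of_ae_map measurable_fst.aemeasurable (Measure.ae_ae_of_ae_compProd h)

lemma measure_ext_Iic_rat {m₁ m₂ : Measure ℝ} [IsFiniteMeasure m₁]
    (h : ∀ q : ℚ, m₁ (Iic (q : ℝ)) = m₂ (Iic (q : ℝ))) : m₁ = m₂ := by
  refine Measure.ext_of_generateFrom_of_iUnion _ (fun n : ℕ => Iic ((n : ℚ) : ℝ))
    Real.borel_eq_generateFrom_Iic_rat Real.isPiSystem_Iic_rat ?_ ?_ ?_ ?_
  · rw [eq_univ_iff_forall]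
    intro x
    obtain ⟨n, hn⟩ := exists_nat_ge x
    exact mem_iUnion.2 ⟨n, by simpa using hn⟩
  · intro n
    simp only [mem_iUnion, mem_singleton_iff]
    exact ⟨n, rfl⟩
  · intro n; exact measure_ne_top _ _
  · intro s hs
    simp only [mem_iUnion, mem_singleton_iff] at hs
    obtain ⟨q, rfl⟩ := hs
    exact h q

/-- The point of the fibre through `x` at signed distance `s` from `x`. -/
def lineAt (θ : ℝ) (x : X2) (s : ℝ) : X2 := ![x 0 - s * Real.sin θ, x 1 + s * Real.cos θ]

lemma rotInv_eq_lineAt (θ : ℝ) (x : X2) (z : ℝ) :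
    rotInv θ (projDir θ x, z) = lineAt θ x (z - projPerp θ x) := by
  have h := Real.sin_sq_add_cos_sq θ
  ext i
  fin_cases i
  · simp [rotInv, projDir, projPerp, lineAt]
    linear_combination (x 0) * h
  · simp [rotInv, projDir, projPerp, lineAt]
    linear_combination (x 1) * h

/-- The window of `p`: parameters `s` at which the fibre through `p.2` stays in the unit square. -/
def win (θ : ℝ) (p : PM × X2) : Set ℝ := {s | lineAt θ p.2 s ∈ unitCube 2}

lemma measurable_lineAt (θ : ℝ) : Measurable fun w : X2 × ℝ => lineAt θ w.1 w.2 := by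
  rw [measurable_pi_iff]
  intro i
  fin_cases i
  · simp [lineAt]; fun_prop
  · simp [lineAt]; fun_prop

lemma measurableSet_win_graph (θ : ℝ) : MeasurableSet {w : (PM × X2) × ℝ | w.2 ∈ win θ w.1} := by
  have : Measurable fun w : (PM × X2) × ℝ => lineAt θ w.1.2 w.2 :=
    (measurable_lineAt θ).comp ((measurable_snd.comp measurable_fst).prodMk measurable_snd)
  exact this measurableSet_unitCube

lemma measurableSet_win (θ : ℝ) (p : PM × X2) : MeasurableSet (win θ p) :=
  measurable_prodMk_left (measurableSet_win_graph θ)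

lemma mem_cellC_iff (c : Fin 2 → ℤ) (y : X2) : y ∈ cellC c ↔ scaleC c y ∈ unitCube 2 := by
  simp only [cellC, scaleC, unitCube, mem_ofPred_eq]
  refine forall_congr' fun i => ?_
  rw [Int.floor_eq_iff]
  constructor <;> rintro ⟨h1, h2⟩ <;> constructor <;> linarith

lemma scaleC_lineAt (θ : ℝ) (c : Fin 2 → ℤ) (x : X2) (s : ℝ) :
    scaleC c (lineAt θ x s) = lineAt θ (scaleC c x) (2 * s) := by
  ext i
  fin_cases i
  · simp [scaleC, lineAt]; ring
  · simp [scaleC, lineAt]; ring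

lemma CPmag_snd (p : PM × X2) : (CPmag p).2 = scaleC (digits p.2) p.2 := rfl

lemma mem_win_CPmag (θ : ℝ) (p : PM × X2) (s : ℝ) :
    2 * s ∈ win θ (CPmag p) ↔ lineAt θ p.2 s ∈ cellC (digits p.2) := by
  rw [mem_cellC_iff, scaleC_lineAt]; rfl

lemma cellC_subset {x : X2} (hx : x ∈ unitCube 2) : cellC (digits x) ⊆ unitCube 2 := by
  intro y hy i
  have h := hy i
  simp only [digits] at h
  obtain ⟨h0, h1⟩ := hx i
  have a1 : 0 ≤ ⌊(2:ℝ) ^ 1 * x i⌋ := Int.floor_nonneg.2 (by linarith)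
  have a2 : ⌊(2:ℝ) ^ 1 * x i⌋ < 2 := by rw [Int.floor_lt]; push_cast; linarith
  rw [← h] at a1 a2
  rw [Int.floor_nonneg] at a1
  rw [Int.floor_lt] at a2
  push_cast at a2
  constructor <;> linarith

lemma win_subset_of_CPmag (θ : ℝ) {p : PM × X2} (hp : p.2 ∈ unitCube 2) {s : ℝ}
    (hs : 2 * s ∈ win θ (CPmag p)) : s ∈ win θ p :=
  cellC_subset hp ((mem_win_CPmag θ p s).1 hs)

lemma zero_mem_win (θ : ℝ) {p : PM × X2} (hp : p.2 ∈ unitCube 2) : (0 : ℝ) ∈ win θ p := by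
  have : lineAt θ p.2 0 = p.2 := by ext i; fin_cases i <;> simp [lineAt]
  simpa [win, this] using hp

lemma win_bound (θ : ℝ) {p : PM × X2} (hp : p.2 ∈ unitCube 2) {s : ℝ} (hs : s ∈ win θ p) :
    |s| ≤ 2 := by
  have h0 := hs 0; have h1 := hs 1; have k0 := hp 0; have k1 := hp 1
  simp [lineAt] at h0 h1
  have h := Real.sin_sq_add_cos_sq θ
  have e : s ^ 2 = (s * Real.sin θ) ^ 2 + (s * Real.cos θ) ^ 2 := by linear_combination (-s^2) * h
  have a : (s * Real.sin θ) ^ 2 ≤ 1 := by nlinarith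
  have b : (s * Real.cos θ) ^ 2 ≤ 1 := by nlinarith
  exact abs_le_of_sq_le_sq (by nlinarith) (by norm_num)

/-! ### Fibres of components -/

lemma projDir_scaleC (θ : ℝ) (c : Fin 2 → ℤ) (x : X2) :
    projDir θ (scaleC c x) = 2 * projDir θ x - projDir θ (fun i => (c i : ℝ)) := by
  simp [projDir, scaleC]; ring

lemma projPerp_scaleC (θ : ℝ) (c : Fin 2 → ℤ) (x : X2) :
    projPerp θ (scaleC c x) = 2 * projPerp θ x - projPerp θ (fun i => (c i : ℝ)) := by
  simp [projPerp, scaleC]; ring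

lemma lintegral_mul_fibK (θ : ℝ) (μ : PM) {C : Set X2} (hC : MeasurableSet C) {h : ℝ → ℝ≥0∞}
    (hh : Measurable h) :
    ∫⁻ y, h y * fibK θ (μ, y) {z | rotInv θ (y, z) ∈ C} ∂((μ : Measure X2).map (projDir θ)) =
      ∫⁻ x in C, h (projDir θ x) ∂(μ : Measure X2) := by
  have hm : MeasurableSet (rotInv θ ⁻¹' C) := measurable_rotInv θ hC
  have hf : Measurable fun w : ℝ × ℝ => (rotInv θ ⁻¹' C).indicator (fun w => h w.1) w :=
    (hh.comp measurable_fst).indicator hm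
  have key := ProbabilityTheory.lintegral_condKernel (κ := rotK θ) hf μ
  rw [rotK_fst] at key
  have e1 : ∀ y : ℝ, ∫⁻ ω, (rotInv θ ⁻¹' C).indicator (fun w => h w.1) (y, ω)
      ∂((rotK θ).condKernel (μ, y)) = h y * fibK θ (μ, y) {z | rotInv θ (y, z) ∈ C} := by
    intro y
    have hy : MeasurableSet {z | rotInv θ (y, z) ∈ C} := measurable_prodMk_left hm
    rw [← lintegral_indicator_const hy (h y)]
    rfl
  simp_rw [e1] at key
  rw [key, rotK, Kernel.map_apply _ (measurable_rot θ), lintegral_map hf (measurable_rot θ),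
    ← lintegral_indicator hC]
  refine lintegral_congr fun x => ?_
  simp only [indicator, mem_preimage, rotInv_proj]

/-- The fibre of a component is the normalized restriction of the fibre of the measure. -/
lemma fib_component_ae (θ : ℝ) (μ ν : PM) (c : Fin 2 → ℤ) (hc : (μ : Measure X2) (cellC c) ≠ 0)
    (hν : (ν : Measure X2) = compC c (μ : Measure X2)) {B : Set ℝ} (hB : MeasurableSet B) :
    ∀ᵐ y ∂((μ : Measure X2).map (projDir θ)),
      fibK θ (ν, 2 * y - projDir θ (fun i => (c i : ℝ)))
          {z | (z + projPerp θ (fun i => (c i : ℝ))) / 2 ∈ B} *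
        fibK θ (μ, y) {z | rotInv θ (y, z) ∈ cellC c} =
      fibK θ (μ, y) {z | rotInv θ (y, z) ∈ cellC c ∧ z ∈ B} := by
  set a := projDir θ (fun i => (c i : ℝ)) with ha
  set b := projPerp θ (fun i => (c i : ℝ)) with hb
  have hC := measurableSet_cellC c
  have hB' : MeasurableSet {z : ℝ | (z + b) / 2 ∈ B} := by
    have : Measurable fun z : ℝ => (z + b) / 2 := by fun_prop
    exact this hB
  have m1 : Measurable fun y : ℝ => fibK θ (ν, 2 * y - a) {z | (z + b) / 2 ∈ B} :=
    (Kernel.measurable_coe (fibK θ) hB').comp (measurable_const.prodMk (by fun_prop))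
  have m2 : Measurable fun y : ℝ => fibK θ (μ, y) {z | rotInv θ (y, z) ∈ cellC c} := by
    have hS : MeasurableSet {w : (PM × ℝ) × ℝ | rotInv θ (w.1.2, w.2) ∈ cellC c} :=
      ((measurable_rotInv θ).comp ((measurable_snd.comp measurable_fst).prodMk measurable_snd)) hC
    exact (measurable_fibK_slice θ hS).comp measurable_prodMk_left
  have m3 : Measurable fun y : ℝ => fibK θ (μ, y) {z | rotInv θ (y, z) ∈ cellC c ∧ z ∈ B} := by
    have hS : MeasurableSet {w : (PM × ℝ) × ℝ | rotInv θ (w.1.2, w.2) ∈ cellC c ∧ w.2 ∈ B} :=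
      (((measurable_rotInv θ).comp ((measurable_snd.comp measurable_fst).prodMk measurable_snd)) hC).inter
        (measurable_snd hB)
    exact (measurable_fibK_slice θ hS).comp measurable_prodMk_left
  refine ae_eq_of_forall_setLIntegral_eq_of_sigmaFinite (m1.mul m2) m3 fun Y hY _ => ?_
  have r : (∫⁻ y in Y, fibK θ (μ, y) {z | rotInv θ (y, z) ∈ cellC c ∧ z ∈ B}
      ∂((μ : Measure X2).map (projDir θ))) =
      (μ : Measure X2) (cellC c ∩ {x | projDir θ x ∈ Y ∧ projPerp θ x ∈ B}) := by
    have hS : MeasurableSet {w : ℝ × ℝ | rotInv θ w ∈ cellC c ∧ w.1 ∈ Y ∧ w.2 ∈ B} :=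
      (measurable_rotInv θ hC).inter ((measurable_fst hY).inter (measurable_snd hB))
    have := fibK_lintegral θ μ hS
    simp only [mem_ofPred_eq, rotInv_proj] at this
    rw [← lintegral_indicator hY]
    refine Eq.trans (lintegral_congr fun y => ?_) this
    by_cases hy : y ∈ Y <;> simp [hy]
  rw [r, ← lintegral_indicator hY]
  have l1 := lintegral_mul_fibK θ μ hC (h := Y.indicator fun y => fibK θ (ν, 2 * y - a) {z | (z + b) / 2 ∈ B})
    (m1.indicator hY)
  have l2 : ∀ y, Y.indicator ((fun y => fibK θ (ν, 2 * y - a) {z | (z + b) / 2 ∈ B}) * 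
      fun y => fibK θ (μ, y) {z | rotInv θ (y, z) ∈ cellC c}) y
      = Y.indicator (fun y => fibK θ (ν, 2 * y - a) {z | (z + b) / 2 ∈ B}) y * 
        fibK θ (μ, y) {z | rotInv θ (y, z) ∈ cellC c} := by
    intro y
    by_cases hy : y ∈ Y <;> simp [hy]
  have l3 : (∫⁻ y, Y.indicator ((fun y => fibK θ (ν, 2 * y - a) {z | (z + b) / 2 ∈ B}) * 
      fun y => fibK θ (μ, y) {z | rotInv θ (y, z) ∈ cellC c}) y ∂((μ : Measure X2).map (projDir θ)))
      = ∫⁻ x in cellC c, Y.indicator (fun y => fibK θ (ν, 2 * y - a) {z | (z + b) / 2 ∈ B})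
        (projDir θ x) ∂(μ : Measure X2) := by
    rw [← l1]; exact lintegral_congr l2
  refine l3.trans ?_
  -- the right-hand side computed through the component `ν`
  have hY' : MeasurableSet {w : ℝ × ℝ | (w.1 + a) / 2 ∈ Y ∧ (w.2 + b) / 2 ∈ B} := by
    have : Measurable fun w : ℝ × ℝ => ((w.1 + a) / 2, (w.2 + b) / 2) := by fun_prop
    exact this (hY.prod hB)
  have l4 := fibK_lintegral' θ ν hY'
  have mF : Measurable fun x : X2 => fibK θ (ν, projDir θ x)
      {z | (projDir θ x, z) ∈ {w : ℝ × ℝ | (w.1 + a) / 2 ∈ Y ∧ (w.2 + b) / 2 ∈ B}} := by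
    have hS : MeasurableSet {w : (PM × ℝ) × ℝ | (w.1.2, w.2) ∈
      {w : ℝ × ℝ | (w.1 + a) / 2 ∈ Y ∧ (w.2 + b) / 2 ∈ B}} :=
      ((measurable_snd.comp measurable_fst).prodMk measurable_snd) hY'
    exact (measurable_fibK_slice θ hS).comp (measurable_const.prodMk (measurable_projDir θ))
  have hZ : MeasurableSet {x : X2 | (projDir θ x, projPerp θ x) ∈
      {w : ℝ × ℝ | (w.1 + a) / 2 ∈ Y ∧ (w.2 + b) / 2 ∈ B}} := measurable_rot θ hY'
  rw [hν, compC_apply _ _ hZ, compC, lintegral_smul_measure,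
    lintegral_map mF (measurable_scaleC c)] at l4
  have hinj := (ENNReal.mul_right_inj (ENNReal.inv_ne_zero.2 (measure_ne_top (μ : Measure X2) (cellC c)))
    (ENNReal.inv_ne_top.2 hc)).1 l4
  have e1 : cellC c ∩ scaleC c ⁻¹' {x | (projDir θ x, projPerp θ x) ∈
      {w : ℝ × ℝ | (w.1 + a) / 2 ∈ Y ∧ (w.2 + b) / 2 ∈ B}} =
      cellC c ∩ {x | projDir θ x ∈ Y ∧ projPerp θ x ∈ B} := by
    ext x
    simp only [mem_inter_iff, mem_preimage, mem_ofPred_eq, projDir_scaleC, projPerp_scaleC, ← ha, ← hb]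
    simp
  rw [e1] at hinj
  rw [← hinj]
  refine lintegral_congr fun x => ?_
  simp only [mem_ofPred_eq, projDir_scaleC, ← ha]
  by_cases hy : projDir θ x ∈ Y <;> simp [hy]

/-! ### Fibres along the orbit under magnification -/

/-- Version of `fib_component_ae` with an exceptional set that does not depend on the test set. -/
lemma fib_component_ae' (θ : ℝ) (μ ν : PM) (c : Fin 2 → ℤ) (hc : (μ : Measure X2) (cellC c) ≠ 0)
    (hν : (ν : Measure X2) = compC c (μ : Measure X2)) :
    ∀ᵐ x ∂(μ : Measure X2), ∀ B : Set ℝ, MeasurableSet B →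
      fibK θ (ν, 2 * projDir θ x - projDir θ (fun i => (c i : ℝ)))
          {z | (z + projPerp θ (fun i => (c i : ℝ))) / 2 ∈ B} *
        fibK θ (μ, projDir θ x) {z | rotInv θ (projDir θ x, z) ∈ cellC c} =
      fibK θ (μ, projDir θ x) {z | rotInv θ (projDir θ x, z) ∈ cellC c ∧ z ∈ B} := by
  have h : ∀ᵐ y ∂((μ : Measure X2).map (projDir θ)), ∀ q : ℚ,
      fibK θ (ν, 2 * y - projDir θ (fun i => (c i : ℝ)))
          {z | (z + projPerp θ (fun i => (c i : ℝ))) / 2 ∈ Iic (q : ℝ)} *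
        fibK θ (μ, y) {z | rotInv θ (y, z) ∈ cellC c} =
      fibK θ (μ, y) {z | rotInv θ (y, z) ∈ cellC c ∧ z ∈ Iic (q : ℝ)} :=
    ae_all_iff.2 fun q => fib_component_ae θ μ ν c hc hν measurableSet_Iic
  filter_upwards [ae_of_ae_map (measurable_projDir θ).aemeasurable h] with x hx B hB
  set y := projDir θ x
  set b := projPerp θ (fun i => (c i : ℝ))
  have hC : MeasurableSet {z | rotInv θ (y, z) ∈ cellC c} :=
    ((measurable_rotInv θ).comp measurable_prodMk_left) (measurableSet_cellC c)
  have hm : Measurable fun z : ℝ => (z + b) / 2 := by fun_prop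
  have key : (fibK θ (μ, y) {z | rotInv θ (y, z) ∈ cellC c}) •
      (fibK θ (ν, 2 * y - projDir θ (fun i => (c i : ℝ)))).map (fun z => (z + b) / 2) =
      (fibK θ (μ, y)).restrict {z | rotInv θ (y, z) ∈ cellC c} := by
    have : IsFiniteMeasure ((fibK θ (μ, y) {z | rotInv θ (y, z) ∈ cellC c}) •
      (fibK θ (ν, 2 * y - projDir θ (fun i => (c i : ℝ)))).map (fun z => (z + b) / 2)) :=
      Measure.smul_finite _ (measure_ne_top _ _)
    refine measure_ext_Iic_rat fun q => ?_
    rw [Measure.smul_apply, smul_eq_mul, Measure.map_apply hm measurableSet_Iic,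
      Measure.restrict_apply measurableSet_Iic, mul_comm, inter_comm]
    exact hx q
  have h2 := congrArg (fun m : Measure ℝ => m B) key
  simp only [Measure.smul_apply, smul_eq_mul] at h2
  rw [Measure.map_apply hm hB, Measure.restrict_apply hB, mul_comm, inter_comm] at h2
  exact h2

/-- Almost every point of `C` lies on a fibre whose fibre measure charges `C`. -/
lemma fib_pos_ae (θ : ℝ) (μ : PM) (C : Set X2) (hC : MeasurableSet C) :
    ∀ᵐ x ∂(μ : Measure X2), x ∈ C →
      fibK θ (μ, projDir θ x) {z | rotInv θ (projDir θ x, z) ∈ C} ≠ 0 := by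
  have hS0 : MeasurableSet {w : (PM × ℝ) × ℝ | rotInv θ (w.1.2, w.2) ∈ C} :=
    ((measurable_rotInv θ).comp ((measurable_snd.comp measurable_fst).prodMk measurable_snd)) hC
  have m2 : Measurable fun y : ℝ => fibK θ (μ, y) {z | rotInv θ (y, z) ∈ C} :=
    (measurable_fibK_slice θ hS0).comp measurable_prodMk_left
  have hY : MeasurableSet {y : ℝ | fibK θ (μ, y) {z | rotInv θ (y, z) ∈ C} = 0} :=
    m2 (measurableSet_singleton 0)
  have := fibK_lintegral θ μ ((measurable_fst hY).inter (measurable_rotInv θ hC))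
  rw [lintegral_eq_zero_of_ae_eq_zero] at this
  · rw [ae_iff]
    have h2 := this.symm
    convert h2 using 2
    ext x
    simp [rotInv_proj, and_comm]
  · refine Eventually.of_forall fun y => ?_
    by_cases hy : fibK θ (μ, y) {z | rotInv θ (y, z) ∈ C} = 0
    · exact measure_mono_null (fun z hz => hz.2) hy
    · simp [hy]

lemma cell_pos_ae (μ : Measure X2) : ∀ᵐ x ∂μ, μ (cellC (digits x)) ≠ 0 := by
  have : ∀ᵐ x ∂μ, ∀ c : Fin 2 → ℤ, x ∈ cellC c → μ (cellC c) ≠ 0 := by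
    rw [ae_all_iff]
    intro c
    by_cases h : μ (cellC c) = 0
    · filter_upwards [measure_eq_zero_iff_ae_notMem.1 h] with x hx hx'
      exact absurd hx' hx
    · exact Eventually.of_forall fun x _ => h
  filter_upwards [this] with x hx
  exact hx _ fun i => rfl

/-- The centred fibre measure of `q` is the centred fibre measure of `p`, conditioned on the part of
the fibre that lies in the (rescaled) window of `q` and blown up by `2 ^ k`. The identity is written
without division, with the positivity of the conditioning event as a separate clause. -/
def StepRel (θ : ℝ) (k : ℕ) (p q : PM × X2) : Prop :=
  cenK θ p {s | 2 ^ k * s ∈ win θ q} ≠ 0 ∧ ∀ A : Set ℝ, MeasurableSet A →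
    cenK θ q A * cenK θ p {s | 2 ^ k * s ∈ win θ q} =
      cenK θ p {s | 2 ^ k * s ∈ win θ q ∧ 2 ^ k * s ∈ A}

lemma measurableSet_scaled (k : ℕ) {A : Set ℝ} (hA : MeasurableSet A) :
    MeasurableSet {s : ℝ | 2 ^ k * s ∈ A} := by
  have : Measurable fun s : ℝ => 2 ^ k * s := by fun_prop
  exact this hA

lemma stepRel_of_rat {θ : ℝ} {k : ℕ} {p q : PM × X2}
    (h0 : cenK θ p {s | 2 ^ k * s ∈ win θ q} ≠ 0)
    (h : ∀ r : ℚ, cenK θ q (Iic (r : ℝ)) * cenK θ p {s | 2 ^ k * s ∈ win θ q} =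
      cenK θ p {s | 2 ^ k * s ∈ win θ q ∧ 2 ^ k * s ∈ Iic (r : ℝ)}) : StepRel θ k p q := by
  refine ⟨h0, fun A hA => ?_⟩
  have hw := measurableSet_scaled k (measurableSet_win θ q)
  have hm : Measurable fun s : ℝ => 2 ^ k * s := by fun_prop
  have key : (cenK θ p {s | 2 ^ k * s ∈ win θ q}) • cenK θ q =
      ((cenK θ p).restrict {s | 2 ^ k * s ∈ win θ q}).map (fun s => 2 ^ k * s) := by
    have : IsFiniteMeasure ((cenK θ p {s | 2 ^ k * s ∈ win θ q}) • cenK θ q) :=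
      Measure.smul_finite _ (measure_ne_top _ _)
    refine measure_ext_Iic_rat fun r => ?_
    rw [Measure.smul_apply, smul_eq_mul, Measure.map_apply hm measurableSet_Iic,
      Measure.restrict_apply (hm measurableSet_Iic), mul_comm, inter_comm]
    exact h r
  have h2 := congrArg (fun m : Measure ℝ => m A) key
  simp only [Measure.smul_apply, smul_eq_mul] at h2
  rw [Measure.map_apply hm hA, Measure.restrict_apply (hm hA), mul_comm, inter_comm] at h2
  exact h2

lemma stepRel_CPmag {Q : Measure (PM × X2)} (hQ : IsCPDist Q) (θ : ℝ) :
    ∀ᵐ p ∂Q, StepRel θ 1 p (CPmag p) := by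
  have hW : MeasurableSet {w : (PM × X2) × ℝ | 2 ^ 1 * w.2 ∈ win θ (CPmag w.1)} := by
    have : Measurable fun w : (PM × X2) × ℝ => (CPmag w.1, (2 : ℝ) ^ 1 * w.2) :=
      (measurable_CPmag.comp measurable_fst).prodMk (by fun_prop)
    exact this (measurableSet_win_graph θ)
  have m0 : Measurable fun p : PM × X2 => cenK θ p {s | 2 ^ 1 * s ∈ win θ (CPmag p)} :=
    Kernel.measurable_kernel_prodMk_left hW
  have key : ∀ μ : PM, ∀ᵐ x ∂(μ : Measure X2), StepRel θ 1 (μ, x) (CPmag (μ, x)) := by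
    intro μ
    have h1 : ∀ᵐ x ∂(μ : Measure X2), ∀ c : Fin 2 → ℤ, (μ : Measure X2) (cellC c) ≠ 0 →
        ∀ ν : PM, (ν : Measure X2) = compC c (μ : Measure X2) → ∀ B : Set ℝ, MeasurableSet B →
      fibK θ (ν, 2 * projDir θ x - projDir θ (fun i => (c i : ℝ)))
          {z | (z + projPerp θ (fun i => (c i : ℝ))) / 2 ∈ B} *
        fibK θ (μ, projDir θ x) {z | rotInv θ (projDir θ x, z) ∈ cellC c} =
      fibK θ (μ, projDir θ x) {z | rotInv θ (projDir θ x, z) ∈ cellC c ∧ z ∈ B} := by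
      rw [ae_all_iff]
      intro c
      by_cases hc : (μ : Measure X2) (cellC c) = 0
      · exact Eventually.of_forall fun x h => absurd hc h
      by_cases hν : ∃ ν : PM, (ν : Measure X2) = compC c (μ : Measure X2)
      · obtain ⟨ν, hν⟩ := hν
        filter_upwards [fib_component_ae' θ μ ν c hc hν] with x hx _ ν' hν'
        have : ν' = ν := Subtype.ext (hν'.trans hν.symm)
        subst this
        exact hx
      · exact Eventually.of_forall fun x _ ν h => absurd ⟨ν, h⟩ hν
    have h2 : ∀ᵐ x ∂(μ : Measure X2), ∀ c : Fin 2 → ℤ, x ∈ cellC c →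
        fibK θ (μ, projDir θ x) {z | rotInv θ (projDir θ x, z) ∈ cellC c} ≠ 0 :=
      ae_all_iff.2 fun c => fib_pos_ae θ μ _ (measurableSet_cellC c)
    filter_upwards [h1, h2, cell_pos_ae (μ : Measure X2)] with x hx1 hx2 hx3
    have hν := coe_componentP hx3
    have hw := measurableSet_scaled 1 (measurableSet_win θ (CPmag (μ, x)))
    have e1 : cenK θ (μ, x) {s | 2 ^ 1 * s ∈ win θ (CPmag (μ, x))} =
        fibK θ (μ, projDir θ x) {z | rotInv θ (projDir θ x, z) ∈ cellC (digits x)} := by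
      rw [cenK_apply _ _ hw]
      congr 1
      ext z
      simp only [mem_ofPred_eq, pow_one, mem_win_CPmag, rotInv_eq_lineAt]
    refine ⟨?_, fun A hA => ?_⟩
    · rw [e1]; exact hx2 _ fun i => rfl
    · have hB : MeasurableSet {z : ℝ | 2 * (z - projPerp θ x) ∈ A} := by
        have : Measurable fun z : ℝ => 2 * (z - projPerp θ x) := by fun_prop
        exact this hA
      have := hx1 _ hx3 _ hν _ hB
      have hw2 : MeasurableSet {s | 2 ^ 1 * s ∈ win θ (CPmag (μ, x)) ∧ 2 ^ 1 * s ∈ A} :=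
        hw.inter (measurableSet_scaled 1 hA)
      rw [e1, cenK_apply _ _ hA, cenK_apply _ _ hw2]
      convert this using 2
      · simp only [CPmag_snd, projDir_scaleC, projPerp_scaleC]
        congr 1
        ext z
        simp only [mem_ofPred_eq]
        have : z - (2 * projPerp θ x - projPerp θ fun i => (digits x i : ℝ)) =
          2 * ((z + projPerp θ fun i => (digits x i : ℝ)) / 2 - projPerp θ x) := by ring
        rw [this]
      · ext z
        simp only [mem_ofPred_eq, pow_one, mem_win_CPmag, rotInv_eq_lineAt]
  have hpos : ∀ᵐ p ∂Q, cenK θ p {s | 2 ^ 1 * s ∈ win θ (CPmag p)} ≠ 0 := by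
    refine ae_of_ae_ae hQ (R := fun p => cenK θ p {s | 2 ^ 1 * s ∈ win θ (CPmag p)} ≠ 0)
      (m0 (measurableSet_singleton 0)).compl (Eventually.of_forall fun p => ?_)
    filter_upwards [key p.1] with x hx using hx.1
  have hrat : ∀ᵐ p ∂Q, ∀ r : ℚ, cenK θ (CPmag p) (Iic (r : ℝ)) *
      cenK θ p {s | 2 ^ 1 * s ∈ win θ (CPmag p)} =
      cenK θ p {s | 2 ^ 1 * s ∈ win θ (CPmag p) ∧ 2 ^ 1 * s ∈ Iic (r : ℝ)} := by
    rw [ae_all_iff]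
    intro r
    refine ae_of_ae_ae hQ (R := fun p => cenK θ (CPmag p) (Iic (r : ℝ)) *
      cenK θ p {s | 2 ^ 1 * s ∈ win θ (CPmag p)} =
      cenK θ p {s | 2 ^ 1 * s ∈ win θ (CPmag p) ∧ 2 ^ 1 * s ∈ Iic (r : ℝ)})
      (measurableSet_eq_fun ?_ ?_) (Eventually.of_forall fun p => ?_)
    · exact ((Kernel.measurable_coe (cenK θ) measurableSet_Iic).comp measurable_CPmag).mul m0
    · have hW2 : MeasurableSet {w : (PM × X2) × ℝ | 2 ^ 1 * w.2 ∈ win θ (CPmag w.1) ∧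
          2 ^ 1 * w.2 ∈ Iic (r : ℝ)} :=
        hW.inter (measurable_snd (measurableSet_scaled 1 measurableSet_Iic))
      exact Kernel.measurable_kernel_prodMk_left hW2
    · filter_upwards [key p.1] with x hx using hx.2 _ measurableSet_Iic
  filter_upwards [hpos, hrat] with p h1 h2 using stepRel_of_rat h1 h2

lemma cenK_win_zero {Q : Measure (PM × X2)} (hQ : IsCPDist Q) (θ : ℝ) :
    ∀ᵐ p ∂Q, cenK θ p (win θ p)ᶜ = 0 := by
  refine ae_of_ae_ae hQ (R := fun p => cenK θ p (win θ p)ᶜ = 0) ?_ ?_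
  · exact (Kernel.measurable_kernel_prodMk_left (κ := cenK θ) (measurableSet_win_graph θ).compl)
      (measurableSet_singleton 0)
  · filter_upwards [hQ.2.1] with p hp
    have h0 : (p.1 : Measure X2) (unitCube 2)ᶜ = 0 := by
      rw [prob_compl_eq_zero_iff measurableSet_unitCube]; exact hp.1
    have h1 := fibK_lintegral θ p.1 (measurable_rotInv θ measurableSet_unitCube.compl)
    have h2 : {x | (projDir θ x, projPerp θ x) ∈ rotInv θ ⁻¹' (unitCube 2)ᶜ} = (unitCube 2)ᶜ := by
      ext x; simp [rotInv_proj]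
    rw [h2, h0, lintegral_eq_zero_iff] at h1
    · filter_upwards [ae_of_ae_map (measurable_projDir θ).aemeasurable h1] with x hx
      rw [cenK_apply _ _ (measurableSet_win θ _).compl]
      simp only [Pi.zero_apply] at hx
      convert hx using 2
      ext z
      simp [win, rotInv_eq_lineAt]
    · have hS0 : MeasurableSet {w : (PM × ℝ) × ℝ | (w.1.2, w.2) ∈ rotInv θ ⁻¹' (unitCube 2)ᶜ} :=
        ((measurable_rotInv θ).comp ((measurable_snd.comp measurable_fst).prodMk measurable_snd))
          measurableSet_unitCube.compl
      exact (measurable_fibK_slice θ hS0).comp measurable_prodMk_left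

lemma StepRel.comp {θ : ℝ} {k : ℕ} {p q : PM × X2} (hq : q.2 ∈ unitCube 2)
    (h : StepRel θ k p q) (h' : StepRel θ 1 q (CPmag q)) : StepRel θ (k + 1) p (CPmag q) := by
  have hw := measurableSet_scaled 1 (measurableSet_win θ (CPmag q))
  have hk : ∀ s : ℝ, (2 : ℝ) ^ (k + 1) * s = 2 ^ 1 * (2 ^ k * s) := fun s => by ring
  have e1 : cenK θ p {s | 2 ^ (k + 1) * s ∈ win θ (CPmag q)} =
      cenK θ q {s | 2 ^ 1 * s ∈ win θ (CPmag q)} * cenK θ p {s | 2 ^ k * s ∈ win θ q} := by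
    rw [h.2 _ hw]
    congr 1
    ext s
    simp only [mem_ofPred_eq, hk]
    refine ⟨fun hs => ⟨win_subset_of_CPmag θ hq ?_, hs⟩, fun hs => hs.2⟩
    simpa using hs
  refine ⟨?_, fun A hA => ?_⟩
  · rw [e1]; exact mul_ne_zero h'.1 h.1
  · have hwA : MeasurableSet {s | 2 ^ 1 * s ∈ win θ (CPmag q) ∧ 2 ^ 1 * s ∈ A} :=
      hw.inter (measurableSet_scaled 1 hA)
    rw [e1, ← mul_assoc, h'.2 A hA, h.2 _ hwA]
    congr 1
    ext s
    simp only [mem_ofPred_eq, hk]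
    refine ⟨fun hs => hs.2, fun hs => ⟨win_subset_of_CPmag θ hq ?_, hs⟩⟩
    simpa using hs.1

/-- The fibre of the `k`-th magnification is the blow-up by `2 ^ k` of the fibre. -/
lemma stepRel_iterate {Q : Measure (PM × X2)} (hQ : IsCPDist Q) (θ : ℝ) :
    ∀ᵐ p ∂Q, ∀ k : ℕ, StepRel θ k p (CPmag^[k] p) ∧ (CPmag^[k] p).2 ∈ unitCube 2 := by
  have hM := measurePreserving_CPmag hQ
  rw [ae_all_iff]
  intro k
  induction k with
  | zero =>
    filter_upwards [cenK_win_zero hQ θ, hQ.2.1] with p hp hp2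
    refine ⟨⟨?_, fun A hA => ?_⟩, hp2.2⟩
    · simp only [pow_zero, one_mul, Function.iterate_zero, id]
      intro h0
      have h1 : cenK θ p univ ≤ 0 := by
        rw [← union_compl_self (win θ p)]
        exact (measure_union_le _ _).trans (by rw [hp, add_zero]; exact h0.le)
      simp at h1
    · simp only [pow_zero, one_mul, Function.iterate_zero, id]
      have h1 : cenK θ p (win θ p) = 1 := (prob_compl_eq_zero_iff (measurableSet_win θ p)).1 hp
      have h2 : cenK θ p {s | s ∈ win θ p} = 1 := h1
      rw [h2, mul_one]
      refine le_antisymm ?_ (measure_mono fun s hs => hs.2)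
      refine (measure_le_inter_add_sdiff _ A (win θ p)).trans ?_
      have h3 : cenK θ p (A \ win θ p) = 0 := measure_mono_null (fun s hs => hs.2) hp
      rw [h3, add_zero]
      exact measure_mono fun s hs => ⟨hs.2, hs.1⟩
  | succ k ih =>
    filter_upwards [ih, (hM.iterate k).quasiMeasurePreserving.ae (stepRel_CPmag hQ θ)] with p h1 h2
    rw [Function.iterate_succ_apply']
    exact ⟨h1.1.comp h1.2 h2, CPmag_mem_unitCube _⟩

/-! ### The atom dichotomy -/

lemma ergodic_CPmag {Q : Measure (PM × X2)} (hQ : IsCPDist Q) (herg : CPErgodic Q) :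
    Ergodic CPmag Q := by
  have := hQ.1
  refine ⟨measurePreserving_CPmag hQ, ⟨fun S hS hinv => ?_⟩⟩
  rw [eventuallyConst_set']
  rcases herg S hS hinv with h | h
  · exact Or.inl (ae_eq_empty.2 h)
  · exact Or.inr (ae_eq_univ.2 ((prob_compl_eq_zero_iff hS).2 h))

lemma tendsto_cenK_Icc (m : Measure ℝ) [IsFiniteMeasure m] {C : ℝ} (hC : 0 ≤ C) :
    Tendsto (fun k : ℕ => m (Icc (-(C * (1 / 2) ^ k)) (C * (1 / 2) ^ k))) atTop (nhds (m {0})) := by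
  have hlim : Tendsto (fun k : ℕ => |C| * (1 / 2 : ℝ) ^ k) atTop (nhds 0) := by
    simpa using (tendsto_pow_atTop_nhds_zero_of_lt_one (by norm_num : (0:ℝ) ≤ 1/2) (by norm_num)).const_mul |C|
  rw [abs_of_nonneg hC] at hlim
  have hI : ⋂ k : ℕ, Icc (-(C * (1 / 2 : ℝ) ^ k)) (C * (1 / 2) ^ k) = {0} := by
    ext x
    simp only [mem_iInter, mem_singleton_iff]
    constructor
    · intro h
      have h1 : |x| ≤ 0 := ge_of_tendsto' hlim fun k => abs_le.2 (h k)
      simpa using h1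
    · rintro rfl k
      constructor
      · simp; positivity
      · positivity
  rw [← hI]
  refine tendsto_measure_iInter_atTop (fun k => measurableSet_Icc.nullMeasurableSet) ?_ ⟨0, measure_ne_top _ _⟩
  intro k l hkl
  have : C * (1 / 2 : ℝ) ^ l ≤ C * (1 / 2) ^ k :=
    mul_le_mul_of_nonneg_left (pow_le_pow_of_le_one (by norm_num) (by norm_num) hkl) hC
  exact Icc_subset_Icc (by linarith) this

lemma measurable_atom (θ : ℝ) : Measurable fun p : PM × X2 => cenK θ p {0} :=
  Kernel.measurable_coe _ (measurableSet_singleton 0)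

lemma StepRel.atom {θ : ℝ} {k : ℕ} {p q : PM × X2} (hq : q.2 ∈ unitCube 2)
    (h : StepRel θ k p q) :
    cenK θ q {0} * cenK θ p {s | 2 ^ k * s ∈ win θ q} = cenK θ p {0} := by
  rw [h.2 _ (measurableSet_singleton 0)]
  congr 1
  ext s
  simp only [mem_ofPred_eq, mem_singleton_iff]
  constructor
  · rintro ⟨_, h⟩
    simpa using h
  · rintro rfl
    simpa using zero_mem_win θ hq

lemma window_subset {θ : ℝ} {k : ℕ} {q : PM × X2} (hq : q.2 ∈ unitCube 2) :
    {s | 2 ^ k * s ∈ win θ q} ⊆ Icc (-(2 * (1 / 2 : ℝ) ^ k)) (2 * (1 / 2) ^ k) := by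
  intro s hs
  have := win_bound θ hq hs
  refine mem_Icc.2 (abs_le.1 ?_)
  rw [abs_mul, abs_of_pos (by positivity)] at this
  have h2 : (1 / 2 : ℝ) ^ k * 2 ^ k = 1 := by rw [← mul_pow]; norm_num
  calc |s| = (1 / 2 : ℝ) ^ k * (2 ^ k * |s|) := by rw [← mul_assoc, h2, one_mul]
    _ ≤ (1 / 2 : ℝ) ^ k * 2 := by gcongr
    _ = _ := by ring

/-- Fibres almost surely either give no mass to the point they pass through, or are Dirac masses at
it. Having an atom is an invariant property; if it holds, blowing up makes the atom's mass tend to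
`1` along the orbit, and by invariance of `Q` its distribution does not depend on time. -/
lemma atom_zero_or_one {Q : Measure (PM × X2)} (hQ : IsCPDist Q) (herg : CPErgodic Q) (θ : ℝ) :
    (∀ᵐ p ∂Q, cenK θ p {0} = 0) ∨ (∀ᵐ p ∂Q, cenK θ p {0} = 1) := by
  have := hQ.1
  have hM := measurePreserving_CPmag hQ
  have hit := stepRel_iterate hQ θ
  have hG : MeasurableSet {p : PM × X2 | cenK θ p {0} = 0} :=
    measurable_atom θ (measurableSet_singleton 0)
  have hinv : CPmag ⁻¹' {p : PM × X2 | cenK θ p {0} = 0} =ᵐ[Q] {p : PM × X2 | cenK θ p {0} = 0} := by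
    filter_upwards [hit] with p hp
    have h1 := (hp 1).1.atom (hp 1).2
    have h0 := (hp 1).1.1
    simp only [Function.iterate_one] at h1 h0
    have : (cenK θ (CPmag p) {0} = 0) = (cenK θ p {0} = 0) := by
      rw [← h1, mul_eq_zero]; simp only [h0, or_false]
    exact this
  rcases (ergodic_CPmag hQ herg).quasiErgodic.ae_empty_or_univ₀ hG.nullMeasurableSet hinv with h | h
  swap
  · left
    filter_upwards [eventuallyEq_univ.1 h] with p hp using hp
  right
  have hne : ∀ᵐ p ∂Q, cenK θ p {0} ≠ 0 := by
    filter_upwards [measure_eq_zero_iff_ae_notMem.1 (ae_eq_empty.1 h)] with p hp using hp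
  have hlim : ∀ᵐ p ∂Q, Tendsto (fun k : ℕ => cenK θ (CPmag^[k] p) {0}) atTop (nhds 1) := by
    filter_upwards [hne, hit] with p hp hp2
    have hW : Tendsto (fun k : ℕ => cenK θ p {s | 2 ^ k * s ∈ win θ (CPmag^[k] p)}) atTop
        (nhds (cenK θ p {0})) := by
      refine tendsto_of_tendsto_of_tendsto_of_le_of_le tendsto_const_nhds
        (tendsto_cenK_Icc (cenK θ p) zero_le_two) (fun k => measure_mono ?_)
        (fun k => measure_mono (window_subset (hp2 k).2))
      rintro s rfl
      simpa using zero_mem_win θ (hp2 k).2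
    have h2 := ENNReal.Tendsto.const_div (a := cenK θ p {0}) hW (Or.inr (measure_ne_top _ _))
    rw [ENNReal.div_self hp (measure_ne_top _ _)] at h2
    refine h2.congr fun k => ?_
    rw [← (hp2 k).1.atom (hp2 k).2]
    exact ENNReal.mul_div_cancel_right (hp2 k).1.1 (measure_ne_top _ _)
  have hI := tendsto_lintegral_of_dominated_convergence (μ := Q) (fun _ => 1)
    (fun k => (measurable_atom θ).comp (hM.measurable.iterate k))
    (fun k => Eventually.of_forall fun p => prob_le_one) (by simp) hlim
  have hconst : ∀ k : ℕ, ∫⁻ p, ((fun p : PM × X2 => cenK θ p {0}) ∘ CPmag^[k]) p ∂Q = ∫⁻ p, cenK θ p {0} ∂Q :=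
    fun k => (hM.iterate k).lintegral_comp (measurable_atom θ)
  simp_rw [hconst] at hI
  have h1 := tendsto_nhds_unique tendsto_const_nhds hI
  have := ae_eq_of_ae_le_of_lintegral_le (μ := Q) (f := fun p => cenK θ p {0}) (g := fun _ => 1)
    (Eventually.of_forall fun p => prob_le_one) (by rw [h1]; simp) (by fun_prop) (by rw [h1])
  exact this

/-! ### Digits determined by the projection -/

/-- The first binary digits of a point of the unit square, as booleans. -/
def bits (x : X2) : Fin 2 → Bool := fun i => decide (1 / 2 ≤ x i)

lemma digits_eq_of_bits {x : X2} (hx : x ∈ unitCube 2) (i : Fin 2) :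
    digits x i = if bits x i then 1 else 0 := by
  obtain ⟨h0, h1⟩ := hx i
  simp only [digits, bits, decide_eq_true_eq, pow_one]
  split_ifs with h
  · rw [Int.floor_eq_iff]; push_cast; constructor <;> linarith
  · rw [Int.floor_eq_iff]; push_cast; constructor <;> linarith

lemma digits_eq_of_bits_eq {x x' : X2} (hx : x ∈ unitCube 2) (hx' : x' ∈ unitCube 2)
    (h : bits x = bits x') : digits x = digits x' := by
  funext i
  rw [digits_eq_of_bits hx, digits_eq_of_bits hx', h]

/-- If the fibres are Dirac masses, then outside a set of small measure the first digits of `x`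
are determined by `μ` and by an approximation of `π x`. -/
lemma digits_determined {Q : Measure (PM × X2)} (hQ : IsCPDist Q) {θ : ℝ}
    (hatom : ∀ᵐ p ∂Q, cenK θ p {0} = 1) {δ : ℝ≥0∞} (hδ : 0 < δ) :
    ∃ Bd : Set (PM × X2), MeasurableSet Bd ∧ Q Bd ≤ δ ∧ ∃ r : ℝ, 0 < r ∧
      ∀ (μ : PM) (x x' : X2), (μ, x) ∉ Bd → (μ, x') ∉ Bd → |projDir θ x - projDir θ x'| ≤ r →
        digits x = digits x' := by
  have := hQ.1
  have hf : Measurable fun p : PM × X2 => (p.1, projDir θ p.2) :=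
    measurable_fst.prodMk ((measurable_projDir θ).comp measurable_snd)
  set ρ := Q.map fun p : PM × X2 => (p.1, projDir θ p.2) with hρ
  have : IsProbabilityMeasure ρ := Measure.isProbabilityMeasure_map hf.aemeasurable
  set S : Fin 2 → Set (PM × ℝ) := fun i => {a | fibK θ a {z | rotInv θ (a.2, z) i < 1 / 2} = 1}
  have hS : ∀ i, MeasurableSet (S i) := by
    intro i
    have hS0 : MeasurableSet {w : (PM × ℝ) × ℝ | rotInv θ (w.1.2, w.2) i < 1 / 2} := by
      have : Measurable fun w : (PM × ℝ) × ℝ => rotInv θ (w.1.2, w.2) i :=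
        (measurable_pi_apply i).comp ((measurable_rotInv θ).comp
          ((measurable_snd.comp measurable_fst).prodMk measurable_snd))
      exact this measurableSet_Iio
    exact (measurable_fibK_slice θ hS0) (measurableSet_singleton 1)
  have hSmem : ∀ (μ : PM) (x : X2), cenK θ (μ, x) {0} = 1 → ∀ i,
      ((μ, projDir θ x) ∈ S i ↔ x i < 1 / 2) := by
    intro μ x hx i
    rw [cenK_apply _ _ (measurableSet_singleton 0)] at hx
    simp only [mem_singleton_iff, sub_eq_zero] at hx
    have hx' : fibK θ (μ, projDir θ x) {projPerp θ x} = 1 := hx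
    have hr : rotInv θ (projDir θ x, projPerp θ x) i = x i := by rw [rotInv_proj]
    constructor
    · intro h
      by_contra hxi
      have h1 : fibK θ (μ, projDir θ x) {z | rotInv θ (projDir θ x, z) i < 1 / 2} = 1 := h
      have hdis : Disjoint {z | rotInv θ (projDir θ x, z) i < 1 / 2} {projPerp θ x} := by
        rw [disjoint_singleton_right]
        simp only [mem_ofPred_eq, hr]; exact hxi
      have h2 := measure_union (μ := fibK θ (μ, projDir θ x)) hdis (measurableSet_singleton _)
      rw [h1, hx'] at h2
      have h3 : fibK θ (μ, projDir θ x)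
        ({z | rotInv θ (projDir θ x, z) i < 1 / 2} ∪ {projPerp θ x}) ≤ 1 := prob_le_one
      rw [h2] at h3
      norm_num at h3
    · intro hxi
      refine le_antisymm prob_le_one ?_
      rw [← hx']
      refine measure_mono ?_
      rintro z rfl
      simp only [mem_ofPred_eq, hr]; exact hxi
  have hδ2 : 0 < δ / 2 := ENNReal.half_pos hδ.ne'
  choose B hBm hBδ r hr hB using fun i => unifLocConst_of_measurable ρ (hS i) (δ / 2) hδ2
  have hN : MeasurableSet {p : PM × X2 | ¬ (cenK θ p {0} = 1 ∧ p.2 ∈ unitCube 2)} :=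
    ((measurable_atom θ (measurableSet_singleton 1)).inter (measurable_snd measurableSet_unitCube)).compl
  have hN0 : Q {p : PM × X2 | ¬ (cenK θ p {0} = 1 ∧ p.2 ∈ unitCube 2)} = 0 := by
    have : ∀ᵐ p ∂Q, cenK θ p {0} = 1 ∧ p.2 ∈ unitCube 2 := by
      filter_upwards [hatom, hQ.2.1] with p h1 h2 using ⟨h1, h2.2⟩
    exact ae_iff.1 this
  refine ⟨(fun p : PM × X2 => (p.1, projDir θ p.2)) ⁻¹' (B 0 ∪ B 1) ∪
    {p : PM × X2 | ¬ (cenK θ p {0} = 1 ∧ p.2 ∈ unitCube 2)},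
    (hf ((hBm 0).union (hBm 1))).union hN, ?_, min (r 0) (r 1), lt_min (hr 0) (hr 1), ?_⟩
  · refine (measure_union_le _ _).trans ?_
    rw [hN0, add_zero, ← Measure.map_apply hf ((hBm 0).union (hBm 1)), ← hρ]
    refine (measure_union_le _ _).trans ?_
    calc ρ (B 0) + ρ (B 1) ≤ δ / 2 + δ / 2 := add_le_add (hBδ 0) (hBδ 1)
      _ = δ := ENNReal.add_halves δ
  · intro μ x x' hx hx' hd
    simp only [mem_union, mem_preimage, mem_ofPred_eq, not_or, not_not] at hx hx'
    refine digits_eq_of_bits_eq hx.2.2 hx'.2.2 ?_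
    funext i
    have key : (μ, projDir θ x) ∈ S i ↔ (μ, projDir θ x') ∈ S i := by
      refine hB i μ _ _ ?_ ?_ ?_
      · fin_cases i
        · exact hx.1.1
        · exact hx.1.2
      · fin_cases i
        · exact hx'.1.1
        · exact hx'.1.2
      · fin_cases i
        · exact hd.trans (min_le_left _ _)
        · exact hd.trans (min_le_right _ _)
    rw [hSmem μ x hx.2.1, hSmem μ x' hx'.2.1] at key
    simp only [bits, decide_eq_decide]
    rw [← not_lt, ← not_lt, key]

/-- The code of a point: its digits at the times when its orbit visits `Bd`. -/
def code (Bd : Set (PM × X2)) (μ : PM) (n : ℕ) (x : X2) : Fin n → Option (Fin 2 → Bool) :=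
  fun k => if CPmag^[(k : ℕ)] (μ, x) ∈ Bd then some (bits (CPmag^[(k : ℕ)] (μ, x)).2) else none

lemma projDir_sub_eq (θ : ℝ) {x x' y y' : X2} {c : ℝ} (h : ∀ i, x i - x' i = c * (y i - y' i)) :
    projDir θ x - projDir θ x' = c * (projDir θ y - projDir θ y') := by
  simp only [projDir]
  linear_combination (Real.cos θ) * h 0 + Real.sin θ * h 1

lemma iterate_mem_unitCube {p : PM × X2} (hp : p.2 ∈ unitCube 2) (k : ℕ) :
    (CPmag^[k] p).2 ∈ unitCube 2 := by
  cases k with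
  | zero => exact hp
  | succ k => rw [Function.iterate_succ_apply']; exact CPmag_mem_unitCube _

/-- The magnified measure depends on the point only through its first digits. -/
lemma CPmag_fst_congr {μ : PM} {x x' : X2} (h : digits x = digits x') :
    (CPmag (μ, x)).1 = (CPmag (μ, x')).1 := by
  have : component (μ : Measure X2) 1 x = component (μ : Measure X2) 1 x' := by
    rw [component_eq, component_eq, h]
  exact congrArg (fun m : Measure X2 => if h : IsProbabilityMeasure m then (⟨m, h⟩ : PM)
    else ⟨Measure.dirac 0, by infer_instance⟩) this

/-- Two points with the same code and nearby projections are close to each other: by induction all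
their first `n` digits agree, either because the code records them or because they are determined by
the common magnified measure and the nearby projections. -/
lemma close_of_code {θ r : ℝ} {Bd : Set (PM × X2)}
    (hBd : ∀ (μ : PM) (x x' : X2), (μ, x) ∉ Bd → (μ, x') ∉ Bd →
      |projDir θ x - projDir θ x'| ≤ r → digits x = digits x')
    {μ : PM} {n : ℕ} {x x' : X2} (hx : x ∈ unitCube 2) (hx' : x' ∈ unitCube 2)
    (hcode : code Bd μ n x = code Bd μ n x') (hd : |projDir θ x - projDir θ x'| ≤ r * (1 / 2) ^ n) :
    x' ∈ Metric.ball x (2 * (1 / 2) ^ n) := by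
  have hr : 0 ≤ r := by
    by_contra h
    have : r * (1 / 2) ^ n < 0 := mul_neg_of_neg_of_pos (not_le.1 h) (by positivity)
    linarith [abs_nonneg (projDir θ x - projDir θ x')]
  have key : ∀ k ≤ n, (CPmag^[k] (μ, x)).1 = (CPmag^[k] (μ, x')).1 ∧
      ∀ i, (CPmag^[k] (μ, x)).2 i - (CPmag^[k] (μ, x')).2 i = 2 ^ k * (x i - x' i) := by
    intro k
    induction k with
    | zero => intro _; simp
    | succ k ih =>
      intro hk
      obtain ⟨h1, h2⟩ := ih (by omega)
      have hc := congrFun hcode ⟨k, by omega⟩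
      simp only [code] at hc
      have hu := iterate_mem_unitCube (p := (μ, x)) hx k
      have hu' := iterate_mem_unitCube (p := (μ, x')) hx' k
      rw [Function.iterate_succ_apply', Function.iterate_succ_apply']
      generalize hp : CPmag^[k] (μ, x) = p at *
      generalize hp' : CPmag^[k] (μ, x') = p' at *
      obtain ⟨ν, y⟩ := p
      obtain ⟨ν', y'⟩ := p'
      simp only at h1 h2 hu hu'
      subst h1
      have hdig : digits y = digits y' := by
        by_cases a : (ν, y) ∈ Bd
        · by_cases a' : (ν, y') ∈ Bd
          · simp only [a, a', if_true, Option.some.injEq] at hc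
            exact digits_eq_of_bits_eq hu hu' hc
          · simp [a, a'] at hc
        · by_cases a' : (ν, y') ∈ Bd
          · simp [a, a'] at hc
          · refine hBd ν y y' a a' ?_
            rw [projDir_sub_eq θ h2, abs_mul, abs_of_pos (by positivity)]
            calc (2 : ℝ) ^ k * |projDir θ x - projDir θ x'| ≤ 2 ^ k * (r * (1 / 2) ^ n) := by gcongr
              _ ≤ 2 ^ k * (r * (1 / 2) ^ k) := by
                gcongr 2 ^ k * (r * ?_)
                exact pow_le_pow_of_le_one (by norm_num) (by norm_num) (by omega)
              _ = r * (2 * (1 / 2)) ^ k := by rw [mul_pow]; ring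
              _ = r := by norm_num
      refine ⟨CPmag_fst_congr hdig, fun i => ?_⟩
      simp only [CPmag_snd, scaleC, hdig, pow_one]
      rw [pow_succ]
      linear_combination 2 * h2 i
  obtain ⟨-, h⟩ := key n le_rfl
  have hu := iterate_mem_unitCube (p := (μ, x)) hx n
  have hu' := iterate_mem_unitCube (p := (μ, x')) hx' n
  rw [Metric.mem_ball, dist_comm, dist_pi_lt_iff (by positivity)]
  intro i
  rw [Real.dist_eq]
  have h1 : |(2 : ℝ) ^ n * (x i - x' i)| < 1 := by
    rw [← h i, abs_lt]
    constructor <;> linarith [(hu i).1, (hu i).2, (hu' i).1, (hu' i).2]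
  rw [abs_mul, abs_of_pos (by positivity)] at h1
  have h2 : (1 / 2 : ℝ) ^ n * 2 ^ n = 1 := by rw [← mul_pow]; norm_num
  calc |x i - x' i| = (1 / 2 : ℝ) ^ n * (2 ^ n * |x i - x' i|) := by rw [← mul_assoc, h2, one_mul]
    _ < (1 / 2 : ℝ) ^ n * 2 := by gcongr; linarith
    _ = _ := by ring

/-! ### Counting by codes -/

/-- Counting by codes: a set of points visiting `Bd` rarely, at which balls are light while the
projected intervals are heavy, has small measure. -/
lemma measure_le_of_codes {θ r : ℝ} (hr : 0 < r) {Bd : Set (PM × X2)}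
    (hBd : ∀ (μ : PM) (x x' : X2), (μ, x) ∉ Bd → (μ, x') ∉ Bd →
      |projDir θ x - projDir θ x'| ≤ r → digits x = digits x')
    (μ : PM) (n : ℕ) {c : ℝ} {a b : ℝ≥0∞} {G : Set X2}
    (hcube : ∀ x ∈ G, x ∈ unitCube 2)
    (hcard : ∀ x ∈ G, (((Finset.range n).filter fun k => CPmag^[k] (μ, x) ∈ Bd).card : ℝ) ≤ c)
    (ha : ∀ x ∈ G, (μ : Measure X2) (Metric.ball x (2 * (1 / 2) ^ n)) ≤ a)
    (hbG : ∀ x ∈ G, b ≤ (μ : Measure X2).map (projDir θ)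
      (Metric.ball (projDir θ x) (r * (1 / 2) ^ n))) :
    b * (μ : Measure X2) G ≤ 3 * ((Finset.univ.filter fun f : Fin n → Option (Fin 2 → Bool) =>
      (((Finset.univ.filter fun k => f k ≠ none).card : ℕ) : ℝ) ≤ c).card * a) := by
  set L : ℝ := r * (1 / 2) ^ n with hL
  have hLpos : 0 < L := by positivity
  set F := Finset.univ.filter fun f : Fin n → Option (Fin 2 → Bool) =>
      (((Finset.univ.filter fun k => f k ≠ none).card : ℕ) : ℝ) ≤ c with hF
  set m := (μ : Measure X2).map (projDir θ) with hm
  have : IsProbabilityMeasure m := Measure.isProbabilityMeasure_map (measurable_projDir θ).aemeasurable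
  set I : ℤ → Set ℝ := fun i => {y | ⌊y / L⌋ = i} with hI
  have hIm : ∀ i, MeasurableSet (I i) := by
    intro i
    have : Measurable fun y : ℝ => ⌊y / L⌋ := by fun_prop
    exact this (measurableSet_singleton i)
  have hsum : ∑' i, m (I i) = 1 := by
    rw [← measure_iUnion _ hIm, ← measure_univ (μ := m)]
    · congr 1
      rw [eq_univ_iff_forall]
      exact fun y => mem_iUnion.2 ⟨⌊y / L⌋, rfl⟩
    · intro i j hij
      rw [Function.onFun, disjoint_left]
      intro y h1 h2
      exact hij (h1.symm.trans h2)
  have hcodeF : ∀ x ∈ G, code Bd μ n x ∈ F := by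
    intro x hx
    rw [hF, Finset.mem_filter]
    refine ⟨Finset.mem_univ _, le_trans (le_of_eq ?_) (hcard x hx)⟩
    norm_cast
    rw [← Finset.card_map (Fin.valEmbedding)]
    congr 1
    ext k
    simp only [Finset.mem_map, Finset.mem_filter, Finset.mem_range, code,
      Fin.valEmbedding_apply]
    constructor
    · rintro ⟨a, h, rfl⟩
      refine ⟨a.2, ?_⟩
      by_contra h'
      simp [h'] at h
    · rintro ⟨h1, h2⟩
      exact ⟨⟨k, h1⟩, by simp [h2], rfl⟩
  -- In one strip, the points of `G` with a given code lie in a single ball.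
  have hstrip : ∀ i : ℤ, (μ : Measure X2) (G ∩ projDir θ ⁻¹' I i) ≤ F.card * a := by
    intro i
    have hsub : G ∩ projDir θ ⁻¹' I i ⊆ ⋃ f ∈ F, {x ∈ G ∩ projDir θ ⁻¹' I i | code Bd μ n x = f} := by
      intro x hx
      simp only [mem_iUnion]
      exact ⟨_, hcodeF x hx.1, hx, rfl⟩
    refine (measure_mono hsub).trans ((measure_biUnion_finset_le _ _).trans ?_)
    refine (Finset.sum_le_card_nsmul _ _ a fun f _ => ?_).trans (by simp)
    rcases ({x ∈ G ∩ projDir θ ⁻¹' I i | code Bd μ n x = f} : Set X2).eq_empty_or_nonempty with h | ⟨x, hx⟩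
    · rw [h]; simp
    · refine (measure_mono fun x' hx' => ?_).trans (ha x hx.1.1)
      refine close_of_code hBd (hcube x hx.1.1) (hcube x' hx'.1.1) (hx.2.trans hx'.2.symm) ?_
      have e1 : ⌊projDir θ x / L⌋ = i := hx.1.2
      have e2 : ⌊projDir θ x' / L⌋ = i := hx'.1.2
      have e3 := Int.abs_sub_lt_one_of_floor_eq_floor (e1.trans e2.symm)
      rw [← sub_div, abs_div, abs_of_pos hLpos, div_lt_one hLpos] at e3
      exact e3.le
  -- A strip meeting `G` projects near a heavy interval, covered by three consecutive `I j`.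
  have hstrip2 : ∀ i : ℤ, b * (μ : Measure X2) (G ∩ projDir θ ⁻¹' I i) ≤
      (m (I (i - 1)) + m (I i) + m (I (i + 1))) * (F.card * a) := by
    intro i
    rcases (G ∩ projDir θ ⁻¹' I i).eq_empty_or_nonempty with h | ⟨x, hx⟩
    · rw [h]; simp
    · refine mul_le_mul' ((hbG x hx.1).trans ?_) (hstrip i)
      have hsub : Metric.ball (projDir θ x) L ⊆ I (i - 1) ∪ I i ∪ I (i + 1) := by
        intro y hy
        have e1 : ⌊projDir θ x / L⌋ = i := hx.2
        rw [Metric.mem_ball, Real.dist_eq] at hy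
        have h2 : |y / L - projDir θ x / L| < 1 := by
          rw [← sub_div, abs_div, abs_of_pos hLpos, div_lt_one hLpos]; exact hy
        rw [abs_lt] at h2
        rw [Int.floor_eq_iff] at e1
        have f1 : i - 1 ≤ ⌊y / L⌋ := by rw [Int.le_floor]; push_cast; linarith
        have f2 : ⌊y / L⌋ < i + 2 := by rw [Int.floor_lt]; push_cast; linarith
        have f3 : ⌊y / L⌋ = i - 1 ∨ ⌊y / L⌋ = i ∨ ⌊y / L⌋ = i + 1 := by omega
        rcases f3 with f3 | f3 | f3
        · exact Or.inl (Or.inl f3)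
        · exact Or.inl (Or.inr f3)
        · exact Or.inr f3
      refine (measure_mono hsub).trans ((measure_union_le _ _).trans ?_)
      gcongr
      exact measure_union_le _ _
  have hG : G ⊆ ⋃ i, G ∩ projDir θ ⁻¹' I i := fun x hx => mem_iUnion.2 ⟨⌊projDir θ x / L⌋, hx, rfl⟩
  calc b * (μ : Measure X2) G ≤ b * ∑' i, (μ : Measure X2) (G ∩ projDir θ ⁻¹' I i) := by
        gcongr
        exact (measure_mono hG).trans (measure_iUnion_le _)
    _ = ∑' i, b * (μ : Measure X2) (G ∩ projDir θ ⁻¹' I i) := ENNReal.tsum_mul_left.symm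
    _ ≤ ∑' i, (m (I (i - 1)) + m (I i) + m (I (i + 1))) * (F.card * a) := ENNReal.tsum_le_tsum hstrip2
    _ = 3 * (F.card * a) := by
        rw [ENNReal.tsum_mul_right, ENNReal.tsum_add, ENNReal.tsum_add]
        have s1 : ∑' i : ℤ, m (I (i - 1)) = 1 := by
          rw [← hsum]; exact (Equiv.subRight (1 : ℤ)).tsum_eq fun i => m (I i)
        have s2 : ∑' i : ℤ, m (I (i + 1)) = 1 := by
          rw [← hsum]; exact (Equiv.addRight (1 : ℤ)).tsum_eq fun i => m (I i)
        rw [s1, s2, hsum]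
        norm_num

/-! ### Exclusion of Dirac fibres -/

lemma ExactDim.eventually_ball_le {X : Type*} [PseudoMetricSpace X] [MeasurableSpace X]
    {μ : Measure X} [IsFiniteMeasure μ] {d δ : ℝ} (h : ExactDim μ d) (hδ : 0 < δ) {u : ℕ → ℝ}
    (hu : Tendsto u atTop (nhdsWithin 0 (Ioi 0))) :
    ∀ᵐ x ∂μ, ∀ᶠ n in atTop, μ (Metric.ball x (u n)) ≤ ENNReal.ofReal (u n ^ (d - δ)) := by
  filter_upwards [h] with x hx
  have hpos : ∀ᶠ n in atTop, 0 < u n := (tendsto_nhdsWithin_iff.1 hu).2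
  have hlt : ∀ᶠ n in atTop, u n < 1 :=
    (tendsto_nhdsWithin_iff.1 hu).1.eventually (gt_mem_nhds zero_lt_one)
  filter_upwards [(hx.comp hu).eventually (lt_mem_nhds (show d - δ < d by linarith)), hpos, hlt]
    with n h1 h2 h3
  rw [← ENNReal.ofReal_toReal (measure_ne_top μ (Metric.ball x (u n)))]
  refine ENNReal.ofReal_le_ofReal ?_
  have hlog : Real.log (u n) < 0 := Real.log_neg h2 h3
  simp only [Function.comp] at h1
  rw [lt_div_iff_of_neg hlog] at h1
  rcases (ENNReal.toReal_nonneg : 0 ≤ (μ (Metric.ball x (u n))).toReal).eq_or_lt with h0 | h0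
  · rw [← h0]; positivity
  · rw [← Real.log_le_log_iff h0 (by positivity), Real.log_rpow h2]
    exact h1.le

lemma ExactDim.eventually_le_ball {X : Type*} [PseudoMetricSpace X] [HereditarilyLindelofSpace X]
    [MeasurableSpace X]
    {μ : Measure X} [IsFiniteMeasure μ] {d δ : ℝ} (h : ExactDim μ d) (hδ : 0 < δ) {u : ℕ → ℝ}
    (hu : Tendsto u atTop (nhdsWithin 0 (Ioi 0))) :
    ∀ᵐ x ∂μ, ∀ᶠ n in atTop, ENNReal.ofReal (u n ^ (d + δ)) ≤ μ (Metric.ball x (u n)) := by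
  filter_upwards [h, Measure.support_mem_ae (μ := μ)] with x hx hsupp
  have hpos : ∀ᶠ n in atTop, 0 < u n := (tendsto_nhdsWithin_iff.1 hu).2
  have hlt : ∀ᶠ n in atTop, u n < 1 :=
    (tendsto_nhdsWithin_iff.1 hu).1.eventually (gt_mem_nhds zero_lt_one)
  filter_upwards [(hx.comp hu).eventually (gt_mem_nhds (show d < d + δ by linarith)), hpos, hlt]
    with n h1 h2 h3
  have h0 : 0 < (μ (Metric.ball x (u n))).toReal :=
    ENNReal.toReal_pos ((Measure.mem_support_iff_forall x).1 hsupp _ (Metric.ball_mem_nhds x h2)).ne'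
      (measure_ne_top _ _)
  rw [ENNReal.ofReal_le_iff_le_toReal (measure_ne_top _ _)]
  have hlog : Real.log (u n) < 0 := Real.log_neg h2 h3
  simp only [Function.comp] at h1
  rw [div_lt_iff_of_neg hlog] at h1
  rw [← Real.log_le_log_iff (by positivity) h0, Real.log_rpow h2]
  exact h1.le

lemma measurableSet_eventually {X : Type*} [MeasurableSpace X] {H : ℕ → Set X}
    (hH : ∀ n, MeasurableSet (H n)) : MeasurableSet {p | ∀ᶠ n in atTop, p ∈ H n} := by
  have : {p | ∀ᶠ n in atTop, p ∈ H n} = ⋃ N : ℕ, ⋂ n : ℕ, ⋂ _ : N ≤ n, H n := by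
    ext p; simp [eventually_atTop]
  rw [this]
  exact MeasurableSet.iUnion fun N => MeasurableSet.iInter fun n => MeasurableSet.iInter fun _ => hH n

/-- Parameters in the exponential Markov bound `lam ^ (-(ε n)) * (1 + 4 * lam) ^ n` on the number of
codes with at most `ε n` recorded digits, making it at most `2 ^ (2 s n)`. -/
lemma exists_code_params {s : ℝ} (hs : 0 < s) : ∃ lam ε : ℝ, 0 < lam ∧ lam ≤ 1 ∧ 0 < ε ∧
    ∀ n : ℕ, lam ^ (-(ε * n)) * (1 + 4 * lam) ^ n ≤ ((1 / 2 : ℝ) ^ n) ^ (-(2 * s)) := by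
  have h2 : (1 : ℝ) < 2 ^ s := Real.one_lt_rpow (by norm_num) hs
  set lam : ℝ := min 1 ((2 ^ s - 1) / 4) with hlam
  have hl0 : 0 < lam := lt_min one_pos (by linarith)
  have hl1 : lam ≤ 1 := min_le_left _ _
  have hl2 : 1 + 4 * lam ≤ 2 ^ s := by
    have : lam ≤ (2 ^ s - 1) / 4 := min_le_right _ _
    linarith
  have hlog : 0 ≤ -Real.log lam := by
    have := Real.log_nonpos hl0.le hl1; linarith
  have hlog2 := Real.log_pos (one_lt_two)
  refine ⟨lam, s * Real.log 2 / (-Real.log lam + 1), hl0, hl1, by positivity, fun n => ?_⟩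
  set ε := s * Real.log 2 / (-Real.log lam + 1) with hε
  have hεn : lam ^ (-ε) ≤ 2 ^ s := by
    rw [← Real.log_le_log_iff (by positivity) (by positivity), Real.log_rpow hl0,
      Real.log_rpow (by norm_num)]
    have : ε * (-Real.log lam + 1) = s * Real.log 2 := by rw [hε]; field_simp
    have hε0 : 0 < ε := by positivity
    nlinarith
  have e1 : lam ^ (-(ε * n)) = (lam ^ (-ε)) ^ n := by
    rw [← Real.rpow_natCast, ← Real.rpow_mul hl0.le]; ring_nf
  have e2 : ((1 / 2 : ℝ) ^ n) ^ (-(2 * s)) = (2 ^ s) ^ n * (2 ^ s) ^ n := by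
    rw [← Real.rpow_natCast, ← Real.rpow_mul (by norm_num), one_div, Real.inv_rpow (by norm_num),
      ← Real.rpow_neg (by norm_num), ← Real.rpow_natCast, ← Real.rpow_mul (by norm_num),
      ← Real.rpow_add (by norm_num)]
    congr 1; ring
  rw [e1, e2]
  gcongr

/-- Dirac fibres are impossible when the projection loses dimension. On a set of `Q`-measure at least
`1/4`, balls of radius `≈ 2^{-n}` have `μ`-mass at most `≈ 2^{-n(α-δ)}`, projected intervals of that
length have mass at least `≈ 2^{-n(β+δ)}`, and there are at most `2^{2δn}` codes. Counting by codes
then gives `2^{-n(β+δ)} ≲ 2^{2δn} 2^{-n(α-δ)}`, which fails for large `n` since `α - β = κ = 8δ`. -/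
lemma not_dirac {Q : Measure (PM × X2)} (hQ : IsCPDist Q) {θ α β κ : ℝ} (hκ : 0 < κ)
    (hα : ∀ᵐ p ∂Q, ExactDim (p.1 : Measure X2) α)
    (hβ : ∀ᵐ p ∂Q, ExactDim ((p.1 : Measure X2).map (projDir θ)) β)
    (hβκ : β = α - κ) (hatom : ∀ᵐ p ∂Q, cenK θ p {0} = 1) : False := by
  have := hQ.1
  have hM := measurePreserving_CPmag hQ
  obtain ⟨lam, ε, hl0, hl1, hε, hcodes⟩ := exists_code_params (show 0 < κ / 8 by positivity)
  obtain ⟨Bd, hBdm, hBdQ, r, hr, hBd⟩ := digits_determined hQ hatom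
    (δ := ENNReal.ofReal ε * (1 / 4)) (by
      refine ENNReal.mul_pos (ENNReal.ofReal_pos.2 hε).ne' (by norm_num))
  -- `E` holds the pairs whose orbit, over some initial time interval, visits `Bd` too often.
  set E := {p : PM × X2 | ∃ n : ℕ,
      ε * n < (((Finset.range n).filter fun k => CPmag^[k] p ∈ Bd).card : ℝ)} with hE
  have hEQ : Q E ≤ 1 / 4 := by
    have h1 := (maximal_ineq hM hBdm hε).trans hBdQ
    exact (ENNReal.mul_le_mul_iff_right (ENNReal.ofReal_pos.2 hε).ne' ENNReal.ofReal_ne_top).1 h1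
  set F := (toMeasurable Q E)ᶜ with hF
  have hFm : MeasurableSet F := (measurableSet_toMeasurable Q E).compl
  have hFQ : Q Fᶜ ≤ 1 / 4 := by rw [hF, compl_compl, measure_toMeasurable]; exact hEQ
  have hFE : ∀ p ∈ F, ∀ n : ℕ,
      (((Finset.range n).filter fun k => CPmag^[k] p ∈ Bd).card : ℝ) ≤ ε * n := by
    intro p hp n
    by_contra! h
    exact hp (subset_toMeasurable Q E ⟨n, h⟩)
  set δ := κ / 8 with hδ
  have hδ0 : 0 < δ := by positivity
  have hw : Tendsto (fun n : ℕ => (1 / 2 : ℝ) ^ n) atTop (nhds 0) :=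
    tendsto_pow_atTop_nhds_zero_of_lt_one (by norm_num) (by norm_num)
  have hu1 : ∀ C : ℝ, 0 < C →
      Tendsto (fun n : ℕ => C * (1 / 2 : ℝ) ^ n) atTop (nhdsWithin 0 (Ioi 0)) := by
    intro C hC
    refine tendsto_nhdsWithin_iff.2 ⟨by simpa using hw.const_mul C, Eventually.of_forall fun n => ?_⟩
    exact mem_Ioi.2 (by positivity)
  set a : ℕ → ℝ := fun n => (2 * (1 / 2 : ℝ) ^ n) ^ (α - δ) with ha
  set b : ℕ → ℝ := fun n => (r * (1 / 2 : ℝ) ^ n) ^ (β + δ) with hb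
  set H : ℕ → Set (PM × X2) := fun n => {p | (p.1 : Measure X2) (Metric.ball p.2 (2 * (1 / 2) ^ n)) ≤
      ENNReal.ofReal (a n)} ∩ {p | ENNReal.ofReal (b n) ≤ (p.1 : Measure X2).map (projDir θ)
        (Metric.ball (projDir θ p.2) (r * (1 / 2) ^ n))} ∩ {p | p.2 ∈ unitCube 2} with hH
  have hball : ∀ {Y : Type} [MetricSpace Y] [SecondCountableTopology Y] [MeasurableSpace Y] [BorelSpace Y]
      (f : X2 → Y) (_ : Measurable f) (t : ℝ),
      Measurable fun p : PM × X2 => (p.1 : Measure X2) (f ⁻¹' Metric.ball (f p.2) t) := by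
    intro Y _ _ _ _ f hf t
    have hS : MeasurableSet {w : (PM × X2) × X2 | dist (f w.2) (f w.1.2) < t} :=
      measurableSet_lt ((hf.comp measurable_snd).dist (hf.comp (measurable_snd.comp measurable_fst)))
        measurable_const
    exact Kernel.measurable_kernel_prodMk_left
      (κ := tautK.comap (Prod.fst : PM × X2 → PM) measurable_fst) hS
  have hHm : ∀ n, MeasurableSet (H n) := by
    intro n
    refine (MeasurableSet.inter ?_ ?_).inter (measurable_snd measurableSet_unitCube)
    · exact measurableSet_le (hball id measurable_id _) measurable_const
    · refine measurableSet_le measurable_const ?_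
      have := hball (projDir θ) (measurable_projDir θ) (r * (1 / 2) ^ n)
      convert this using 2 with p
      exact Measure.map_apply (measurable_projDir θ) Metric.isOpen_ball.measurableSet
  have hHev : ∀ᵐ p ∂Q, ∀ᶠ n in atTop, p ∈ H n := by
    refine ae_of_ae_ae hQ (R := fun p => ∀ᶠ n in atTop, p ∈ H n) (measurableSet_eventually hHm) ?_
    filter_upwards [hα, hβ, ae_ae_of_ae' hQ hQ.2.1] with p h1 h2 h3
    have : IsProbabilityMeasure ((p.1 : Measure X2).map (projDir θ)) :=
      Measure.isProbabilityMeasure_map (measurable_projDir θ).aemeasurable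
    filter_upwards [h1.eventually_ball_le hδ0 (hu1 2 two_pos),
      ae_of_ae_map (measurable_projDir θ).aemeasurable (h2.eventually_le_ball hδ0 (hu1 r hr)), h3]
      with x k1 k2 k3
    filter_upwards [k1, k2] with n j1 j2
    exact ⟨⟨j1, j2⟩, k3.2⟩
  have hHlim : Tendsto (fun n => Q (H n)) atTop (nhds 1) := by
    rw [← measure_univ (μ := Q)]
    refine tendsto_measure_of_ae_tendsto_indicator_of_isFiniteMeasure atTop MeasurableSet.univ hHm ?_
    filter_upwards [hHev] with p hp
    filter_upwards [hp] with n hn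
    simp [hn]
  have hQlow : ∀ᶠ n in atTop, (1 / 4 : ℝ≥0∞) ≤ Q (F ∩ H n) := by
    have h34 : (1 / 2 : ℝ≥0∞) < 1 := by
      rw [one_div]; exact ENNReal.one_half_lt_one
    filter_upwards [hHlim.eventually (lt_mem_nhds h34)] with n hn
    have h1 : Q (H n) ≤ Q (F ∩ H n) + Q Fᶜ := by
      refine (measure_mono fun p hp => ?_).trans (measure_union_le _ _)
      by_cases h : p ∈ F
      · exact Or.inl ⟨h, hp⟩
      · exact Or.inr h
    have h2 : (1 / 4 : ℝ≥0∞) + 1 / 4 ≤ Q (F ∩ H n) + 1 / 4 := by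
      calc (1 / 4 : ℝ≥0∞) + 1 / 4 = 1 / 2 := by
            rw [← ENNReal.toReal_eq_toReal_iff' (by norm_num) (by norm_num),
              ENNReal.toReal_add (by norm_num) (by norm_num)]
            norm_num
        _ ≤ Q (F ∩ H n) + Q Fᶜ := hn.le.trans h1
        _ ≤ _ := by gcongr
    exact (ENNReal.add_le_add_iff_right (by norm_num)).1 h2
  have hQup : ∀ n : ℕ, ENNReal.ofReal (b n) * Q (F ∩ H n) ≤
      ENNReal.ofReal (3 * (((1 / 2 : ℝ) ^ n) ^ (-(2 * δ)) * a n)) := by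
    intro n
    have hQ1 : IsProbabilityMeasure (Q.map Prod.fst) :=
      Measure.isProbabilityMeasure_map measurable_fst.aemeasurable
    have hFH := hFm.inter (hHm n)
    conv_lhs => rw [cp_eq_compProd hQ]
    rw [Measure.compProd_apply hFH, ← lintegral_const_mul _ (Kernel.measurable_kernel_prodMk_left hFH)]
    have hbd : ∀ μ : PM, ENNReal.ofReal (b n) * tautK μ (Prod.mk μ ⁻¹' (F ∩ H n)) ≤
        ENNReal.ofReal (3 * (((1 / 2 : ℝ) ^ n) ^ (-(2 * δ)) * a n)) := by
      intro μ
      refine (measure_le_of_codes hr hBd μ n (c := ε * n) (a := ENNReal.ofReal (a n))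
        (fun x hx => hx.2.2) (fun x hx => hFE _ hx.1 n) (fun x hx => hx.2.1.1)
        (fun x hx => hx.2.1.2)).trans ?_
      have hc := card_codes_le (D := Fin 2 → Bool) n (c := ε * n) hl0 hl1
      have hc4 : (Fintype.card (Fin 2 → Bool) : ℝ) = 4 := by simp
      rw [hc4] at hc
      have hc2 := hc.trans (hcodes n)
      rw [ENNReal.ofReal_mul (by norm_num), ENNReal.ofReal_mul (by positivity)]
      have h3 : ENNReal.ofReal 3 = 3 := by norm_num
      rw [h3]
      gcongr
      rw [← ENNReal.ofReal_natCast]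
      exact ENNReal.ofReal_le_ofReal hc2
    refine (lintegral_mono hbd).trans ?_
    simp
  -- Dividing the two bounds by `w ^ (β + δ)`, with `w = 2^{-n}`, leaves the positive power `κ / 2`.
  have hreal : ∀ᶠ n : ℕ in atTop, r ^ (β + δ) ≤ 12 * 2 ^ (α - δ) * ((1 / 2 : ℝ) ^ n) ^ (κ / 2) := by
    filter_upwards [hQlow] with n hn
    have h1 : ENNReal.ofReal (b n * (1 / 4)) ≤
        ENNReal.ofReal (3 * (((1 / 2 : ℝ) ^ n) ^ (-(2 * δ)) * a n)) := by
      refine le_trans ?_ (hQup n)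
      rw [ENNReal.ofReal_mul (by positivity)]
      gcongr
      refine le_trans (le_of_eq ?_) hn
      rw [ENNReal.ofReal_div_of_pos (by norm_num)]; norm_num
    rw [ENNReal.ofReal_le_ofReal_iff (by positivity)] at h1
    simp only [ha, hb] at h1
    generalize hwn : (1 / 2 : ℝ) ^ n = w at h1 ⊢
    have hw0 : 0 < w := by rw [← hwn]; positivity
    rw [Real.mul_rpow hr.le hw0.le, Real.mul_rpow (by norm_num) hw0.le] at h1
    have e1 : w ^ (κ / 2) * w ^ (β + δ) = w ^ (-(2 * δ)) * w ^ (α - δ) := by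
      rw [← Real.rpow_add hw0, ← Real.rpow_add hw0]
      congr 1; rw [hβκ, hδ]; ring
    have h2 : r ^ (β + δ) * w ^ (β + δ) ≤ (12 * 2 ^ (α - δ) * w ^ (κ / 2)) * w ^ (β + δ) := by
      calc r ^ (β + δ) * w ^ (β + δ) ≤ 12 * 2 ^ (α - δ) * (w ^ (-(2 * δ)) * w ^ (α - δ)) := by
            linarith
        _ = _ := by rw [← e1]; ring
    exact le_of_mul_le_mul_right h2 (by positivity)
  have hlim0 : Tendsto (fun n : ℕ => 12 * 2 ^ (α - δ) * ((1 / 2 : ℝ) ^ n) ^ (κ / 2)) atTop (nhds 0) := by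
    have := (hw.rpow_const (p := κ / 2) (Or.inr (by positivity))).const_mul (12 * 2 ^ (α - δ))
    rwa [Real.zero_rpow (by positivity), mul_zero] at this
  have := ge_of_tendsto hlim0 hreal
  have h2 : 0 < r ^ (β + δ) := by positivity
  linarith

/-! ### Spreading of atomless fibres -/

/-- If the fibre measures have no atoms, almost no point lies on a side of the square that is
transverse to the fibres. -/
lemma coord_ne_zero_ae {Q : Measure (PM × X2)} (hQ : IsCPDist Q) (θ : ℝ)
    (hatom : ∀ᵐ p ∂Q, cenK θ p {0} = 0) :
    ∀ᵐ p ∂Q, (Real.sin θ ≠ 0 → p.2 0 ≠ 0) ∧ (Real.cos θ ≠ 0 → p.2 1 ≠ 0) := by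
  have key : ∀ (μ : PM) (i : Fin 2) (a : ℝ), (∀ x s, lineAt θ x s i = x i + s * a) → a ≠ 0 →
      (∀ᵐ x ∂(μ : Measure X2), cenK θ (μ, x) {0} = 0) → ∀ᵐ x ∂(μ : Measure X2), x i ≠ 0 := by
    intro μ i a hl ha h0
    have hm : MeasurableSet {x : X2 | x i = 0} :=
      (measurable_pi_apply i) (measurableSet_singleton 0)
    filter_upwards [h0, fib_pos_ae θ μ _ hm] with x hx h1 hxi
    apply h1 hxi
    rw [cenK_apply _ _ (measurableSet_singleton 0)] at hx
    rw [← hx]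
    congr 1
    ext z
    simp only [mem_ofPred_eq, mem_singleton_iff, rotInv_eq_lineAt, hl, hxi, zero_add, mul_eq_zero,
      ha, or_false]
  refine ae_of_ae_ae hQ (R := fun p => (Real.sin θ ≠ 0 → p.2 0 ≠ 0) ∧ (Real.cos θ ≠ 0 → p.2 1 ≠ 0))
    ?_ ?_
  · have h : ∀ i : Fin 2, MeasurableSet {p : PM × X2 | p.2 i ≠ 0} := by
      intro i
      have hi : Measurable fun p : PM × X2 => p.2 i := (measurable_pi_apply i).comp measurable_snd
      exact (hi (measurableSet_singleton 0)).compl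
    exact ((MeasurableSet.const _).imp (h 0)).inter ((MeasurableSet.const _).imp (h 1))
  · filter_upwards [ae_ae_of_ae' hQ hatom] with p hp
    have h0 : Real.sin θ ≠ 0 → ∀ᵐ x ∂(p.1 : Measure X2), x 0 ≠ 0 := fun hs =>
      key p.1 0 (-Real.sin θ) (fun x s => by simp [lineAt]; ring) (neg_ne_zero.2 hs) hp
    have h1 : Real.cos θ ≠ 0 → ∀ᵐ x ∂(p.1 : Measure X2), x 1 ≠ 0 := fun hs =>
      key p.1 1 (Real.cos θ) (fun x s => by simp [lineAt]) hs hp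
    by_cases hs : Real.sin θ = 0 <;> by_cases hc : Real.cos θ = 0
    · simp [hs, hc]
    · simpa [hs, hc] using h1 hc
    · simpa [hs, hc] using h0 hs
    · simpa [hs, hc] using (h0 hs).and (h1 hc)

lemma eventually_mem_win (θ : ℝ) {p : PM × X2} (hp : p.2 ∈ unitCube 2)
    (h : (Real.sin θ ≠ 0 → p.2 0 ≠ 0) ∧ (Real.cos θ ≠ 0 → p.2 1 ≠ 0)) :
    ∀ᶠ s in nhds (0 : ℝ), s ∈ win θ p := by
  have key : ∀ (y a : ℝ), 0 ≤ y ∧ y < 1 → (a ≠ 0 → y ≠ 0) →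
      ∀ᶠ s in nhds (0 : ℝ), 0 ≤ y + s * a ∧ y + s * a < 1 := by
    intro y a hy ha
    by_cases h0 : a = 0
    · simp [h0, hy]
    · have hy0 : 0 < y := lt_of_le_of_ne hy.1 (Ne.symm (ha h0))
      have hc : Tendsto (fun s : ℝ => y + s * a) (nhds 0) (nhds y) := by
        have : Continuous fun s : ℝ => y + s * a := by fun_prop
        simpa using this.tendsto 0
      filter_upwards [hc (Ioo_mem_nhds hy0 hy.2)] with s hs
      exact ⟨hs.1.le, hs.2⟩
  filter_upwards [key (p.2 0) (-Real.sin θ) (hp 0) (fun h1 => h.1 (by simpa using h1)),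
    key (p.2 1) (Real.cos θ) (hp 1) h.2] with s h0 h1 i
  fin_cases i
  · have : lineAt θ p.2 s 0 = p.2 0 + s * -Real.sin θ := by simp [lineAt]; ring
    simpa only [Fin.zero_eta, this] using h0
  · have : lineAt θ p.2 s 1 = p.2 1 + s * Real.cos θ := by simp [lineAt]
    simpa only [Fin.mk_one, this] using h1

lemma Icc_subset_win (θ : ℝ) {p : PM × X2} {r : ℝ} (h1 : r ∈ win θ p) (h2 : -r ∈ win θ p) :
    Icc (-r) r ⊆ win θ p := by
  intro s hs i
  have a := h1 i; have b := h2 i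
  obtain ⟨c, d⟩ := hs
  rcases eq_or_lt_of_le (show 0 ≤ r by linarith) with hr | hr
  · have : s = r := by linarith
    rw [this]; exact a
  · have key : ∀ y t : ℝ, (0 ≤ y + r * t ∧ y + r * t < 1) → (0 ≤ y + -r * t ∧ y + -r * t < 1) →
        0 ≤ y + s * t ∧ y + s * t < 1 := by
      intro y t u v
      rcases le_total 0 t with ht | ht
      · constructor <;> nlinarith
      · constructor <;> nlinarith
    fin_cases i
    · have := key (p.2 0) (-Real.sin θ)
      simp [lineAt] at a b ⊢
      have := this ⟨by linarith, by linarith⟩ ⟨by linarith, by linarith⟩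
      constructor <;> linarith [this.1, this.2]
    · simp [lineAt] at a b ⊢
      exact key _ _ ⟨by linarith, by linarith⟩ ⟨by linarith, by linarith⟩

/-- The pairs `(μ, x)` whose centred fibre measure is concentrated at scale `2^{-l}`, or for which
`x` is so close to the boundary that the fibre interval of that scale leaves the square. -/
def badSet (θ : ℝ) (l : ℕ) : Set (PM × X2) :=
  {p | 2⁻¹ ≤ cenK θ p (Icc (-(1 / 2) ^ l) ((1 / 2) ^ l)) ∨ (1 / 2 : ℝ) ^ l ∉ win θ p ∨
    -(1 / 2 : ℝ) ^ l ∉ win θ p}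

lemma measurableSet_badSet (θ : ℝ) (l : ℕ) : MeasurableSet (badSet θ l) := by
  refine (measurableSet_le measurable_const (Kernel.measurable_coe _ measurableSet_Icc)).union
    (MeasurableSet.union ?_ ?_)
  · exact (measurable_prodMk_right (y := (1 / 2 : ℝ) ^ l) (measurableSet_win_graph θ)).compl
  · exact (measurable_prodMk_right (y := -(1 / 2 : ℝ) ^ l) (measurableSet_win_graph θ)).compl

lemma tendsto_badSet {Q : Measure (PM × X2)} (hQ : IsCPDist Q) (θ : ℝ)
    (hatom : ∀ᵐ p ∂Q, cenK θ p {0} = 0) :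
    Tendsto (fun l => Q (badSet θ l)) atTop (nhds 0) := by
  have := hQ.1
  have h := tendsto_measure_of_ae_tendsto_indicator_of_isFiniteMeasure (μ := Q) (As := badSet θ)
    (A := ∅) atTop MeasurableSet.empty (measurableSet_badSet θ) ?_
  · simpa using h
  filter_upwards [hatom, coord_ne_zero_ae hQ θ hatom, hQ.2.1] with p h0 hc hp
  have h1 := tendsto_cenK_Icc (cenK θ p) (zero_le_one (α := ℝ))
  rw [h0] at h1
  have h2 := h1.eventually (gt_mem_nhds (show (0 : ℝ≥0∞) < 2⁻¹ by simp))
  have hw := eventually_mem_win θ hp.2 hc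
  have hpow : Tendsto (fun l : ℕ => (1 / 2 : ℝ) ^ l) atTop (nhds 0) :=
    tendsto_pow_atTop_nhds_zero_of_lt_one (by norm_num) (by norm_num)
  have hneg : Tendsto (fun l : ℕ => -(1 / 2 : ℝ) ^ l) atTop (nhds 0) := by simpa using hpow.neg
  filter_upwards [h2, hpow.eventually hw, hneg.eventually hw] with l a b c
  simp only [badSet, mem_ofPred_eq, mem_empty_iff_false, iff_false, not_or, not_not, not_le]
  exact ⟨by simpa using a, b, c⟩

/-- A good magnified pair forces the mass of the centred intervals to at least double. -/
lemma double_of_not_bad {θ : ℝ} {k l : ℕ} {p q : PM × X2} (h : StepRel θ k p q)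
    (hq : q.2 ∈ unitCube 2) (hb : q ∉ badSet θ l) :
    2 * cenK θ p (Icc (-(1 / 2) ^ (k + l)) ((1 / 2) ^ (k + l))) <
      cenK θ p (Icc (-(2 * (1 / 2) ^ k)) (2 * (1 / 2) ^ k)) := by
  simp only [badSet, mem_ofPred_eq, not_or, not_not, not_le] at hb
  obtain ⟨h1, h2, h3⟩ := hb
  obtain ⟨hne, hA⟩ := h
  have hs := Icc_subset_win θ h2 h3
  have e := hA _ (measurableSet_Icc (a := -(1 / 2 : ℝ) ^ l) (b := (1 / 2) ^ l))
  have e2 : {s : ℝ | 2 ^ k * s ∈ win θ q ∧ 2 ^ k * s ∈ Icc (-(1 / 2 : ℝ) ^ l) ((1 / 2) ^ l)} =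
      Icc (-(1 / 2) ^ (k + l)) ((1 / 2) ^ (k + l)) := by
    ext s
    have h2k : (0 : ℝ) < 2 ^ k := by positivity
    have : (1 / 2 : ℝ) ^ l = 2 ^ k * (1 / 2) ^ (k + l) := by
      rw [pow_add, ← mul_assoc, ← mul_pow]; norm_num
    have e3 : 2 ^ k * s ∈ Icc (-(1 / 2 : ℝ) ^ l) ((1 / 2) ^ l) ↔
        s ∈ Icc (-(1 / 2 : ℝ) ^ (k + l)) ((1 / 2) ^ (k + l)) := by
      rw [this]
      simp only [mem_Icc, ← mul_neg]
      rw [mul_le_mul_iff_right₀ h2k, mul_le_mul_iff_right₀ h2k]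
    rw [mem_ofPred_eq, ← e3]
    exact ⟨fun h => h.2, fun h => ⟨hs h, h⟩⟩
  rw [e2] at e
  rw [← e, ← mul_assoc]
  refine lt_of_lt_of_le ?_ (measure_mono (window_subset (θ := θ) hq))
  have : 2 * cenK θ q (Icc (-(1 / 2) ^ l) ((1 / 2) ^ l)) < 1 := by
    calc _ < 2 * (2⁻¹ : ℝ≥0∞) := by
          rw [ENNReal.mul_lt_mul_iff_right (by simp) (by simp)]; exact h1
      _ = 1 := ENNReal.mul_inv_cancel (by simp) (by simp)
  calc _ < 1 * cenK θ p {s | 2 ^ k * s ∈ win θ q} := by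
        rw [ENNReal.mul_lt_mul_iff_left hne (measure_ne_top _ _)]; exact this
    _ = _ := one_mul _

/-- Outside a set of small measure, the centred intervals of every orbit fail to double only at a
small proportion of scales, uniformly in the number of scales. -/
lemma exists_exceptional {Q : Measure (PM × X2)} (hQ : IsCPDist Q) (θ : ℝ)
    (hatom : ∀ᵐ p ∂Q, cenK θ p {0} = 0) {ε : ℝ} (hε : 0 < ε) (m : ℕ) {δ : ℝ≥0∞} (hδ : δ ≠ 0) :
    ∃ (l : ℕ) (B : Set (PM × X2)), MeasurableSet B ∧ Q B < δ ∧ ∀ p ∉ B, ∀ n : ℕ, 1 ≤ n →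
      (((Finset.Icc 1 n).filter fun k =>
        cenK θ p (Icc (-(1 / 2) ^ (k + m)) ((1 / 2) ^ (k + m))) ≤
          2 * cenK θ p (Icc (-(1 / 2) ^ (k + l)) ((1 / 2) ^ (k + l)))).card : ℝ) < ε / 2 * n := by
  have := hQ.1
  have hM := measurePreserving_CPmag hQ
  have hε4 : 0 < ε / 4 := by positivity
  have hε4' : ENNReal.ofReal (ε / 4) ≠ 0 := by simpa using hε4
  obtain ⟨l', hl'⟩ := ((tendsto_badSet hQ θ hatom).eventually
    (gt_mem_nhds (show (0 : ℝ≥0∞) < ENNReal.ofReal (ε / 4) * δ by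
      exact pos_iff_ne_zero.2 (mul_ne_zero hε4' hδ)))).exists
  set E : Set (PM × X2) := CPmag^[m + 2] ⁻¹' badSet θ l' with hE
  have hEm : MeasurableSet E := (measurable_CPmag.iterate _) (measurableSet_badSet θ l')
  have hEQ : Q E = Q (badSet θ l') :=
    (hM.iterate (m + 2)).measure_preimage (measurableSet_badSet θ l').nullMeasurableSet
  have hmax := maximal_ineq hM hEm hε4
  set Mx : Set (PM × X2) := {p | ∃ n : ℕ,
      ε / 4 * n < (((Finset.range n).filter fun k => CPmag^[k] p ∈ E).card : ℝ)} with hMx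
  have hMxQ : Q Mx < δ := by
    rw [hEQ] at hmax
    exact (ENNReal.mul_lt_mul_iff_right hε4' ENNReal.ofReal_ne_top).1 (hmax.trans_lt hl')
  set N : Set (PM × X2) :=
    {p | ¬ ∀ k, StepRel θ k p (CPmag^[k] p) ∧ (CPmag^[k] p).2 ∈ unitCube 2} with hN
  have hN0 : Q N = 0 := stepRel_iterate hQ θ
  refine ⟨m + 1 + l', toMeasurable Q (N ∪ Mx), measurableSet_toMeasurable _ _, ?_, ?_⟩
  · rw [measure_toMeasurable]
    exact (measure_union_le _ _).trans_lt (by rwa [hN0, zero_add])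
  intro p hp n hn
  have hp' : p ∉ N ∪ Mx := fun h => hp (subset_toMeasurable _ _ h)
  have hpN : ∀ k, StepRel θ k p (CPmag^[k] p) ∧ (CPmag^[k] p).2 ∈ unitCube 2 := by
    by_contra h; exact hp' (Or.inl h)
  have hpM : (((Finset.range n).filter fun k => CPmag^[k] p ∈ E).card : ℝ) ≤ ε / 4 * n := by
    by_contra! h; exact hp' (Or.inr ⟨n, h⟩)
  have hn0 : (0 : ℝ) < n := by exact_mod_cast hn
  refine lt_of_le_of_lt ?_ (show ε / 4 * n < ε / 2 * n by nlinarith)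
  refine le_trans ?_ hpM
  norm_cast
  refine Finset.card_le_card_of_injOn (fun k => k - 1) ?_ ?_
  · intro k hk
    simp only [Finset.coe_filter, Finset.mem_Icc, Finset.mem_range, mem_ofPred_eq] at hk ⊢
    obtain ⟨⟨hk1, hkn⟩, hk2⟩ := hk
    refine ⟨by omega, ?_⟩
    rw [hE, mem_preimage, ← Function.iterate_add_apply]
    have e1 : m + 2 + (k - 1) = k + m + 1 := by omega
    rw [e1]
    by_contra hb
    have h := double_of_not_bad (hpN (k + m + 1)).1 (hpN (k + m + 1)).2 hb
    have e2 : 2 * (1 / 2 : ℝ) ^ (k + m + 1) = (1 / 2) ^ (k + m) := by rw [pow_succ]; ring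
    have e3 : k + m + 1 + l' = k + (m + 1 + l') := by ring
    rw [e2, e3] at h
    exact absurd hk2 (not_le.2 h)
  · intro a ha b hb hab
    simp only [Finset.coe_filter, Finset.mem_Icc, mem_ofPred_eq] at ha hb
    have := ha.1.1; have := hb.1.1
    simp only at hab
    omega

/-- The theorem in the case where the fibre measures have no atoms. -/
theorem spreading_of_no_atom {Q : Measure (PM × X2)} (hQ : IsCPDist Q) (θ : ℝ)
    (hatom : ∀ᵐ p ∂Q, cenK θ p {0} = 0) {ε : ℝ} (hε : 0 < ε) (hε1 : ε ≤ 1) :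
    ∃ A : Set PM, MeasurableSet A ∧ ENNReal.ofReal (1 - ε) < Q.map Prod.fst A ∧
      ∃ l0 : ℕ, ∀ μ ∈ A, ∀ n : ℕ, 1 ≤ n → ∃ D : Set X2,
        ENNReal.ofReal (1 - ε) < (μ : Measure X2) D ∧
          ∀ x ∈ D, DyadicSpreading (fibK θ (μ, projDir θ x)) n l0 ε := by
  have := hQ.1
  have : IsProbabilityMeasure (Q.map Prod.fst) :=
    Measure.isProbabilityMeasure_map measurable_fst.aemeasurable
  obtain ⟨m, hm⟩ := dyadicSpreading_of_centred hε hε1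
  have hε0 : ENNReal.ofReal ε ≠ 0 := by simpa using hε
  have hε20 : ENNReal.ofReal (ε / 2) ≠ 0 := by simpa using hε
  set c : ℝ≥0∞ := ENNReal.ofReal (ε / 2) * ENNReal.ofReal ε with hc
  have hc0 : c ≠ 0 := mul_ne_zero hε20 hε0
  have hct : c ≠ ∞ := ENNReal.mul_ne_top ENNReal.ofReal_ne_top ENNReal.ofReal_ne_top
  obtain ⟨l, B, hBm, hBQ, hB⟩ := exists_exceptional hQ θ hatom hε m
    (δ := c * ENNReal.ofReal ε) (mul_ne_zero hc0 hε0)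
  have hmeas : Measurable fun μ : PM => (μ : Measure X2) {x | (μ, x) ∈ B} :=
    Kernel.measurable_kernel_prodMk_left (κ := tautK) hBm
  -- Markov's inequality over the distribution of the measure component.
  have hQB : ∫⁻ μ, (μ : Measure X2) {x | (μ, x) ∈ B} ∂(Q.map Prod.fst) = Q B := by
    conv_rhs => rw [cp_eq_compProd hQ, Measure.compProd_apply hBm]
    rfl
  refine ⟨{μ | c ≤ (μ : Measure X2) {x | (μ, x) ∈ B}}ᶜ,
    (measurableSet_le measurable_const hmeas).compl, ofReal_lt_measure_compl hε1 ?_, l, ?_⟩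
  · have h := mul_meas_ge_le_lintegral₀ (μ := Q.map Prod.fst) hmeas.aemeasurable c
    rw [hQB] at h
    exact (ENNReal.mul_lt_mul_iff_right hc0 hct).1 (h.trans_lt hBQ)
  intro μ hμ n hn
  simp only [mem_compl_iff, mem_ofPred_eq, not_le] at hμ
  have hS : MeasurableSet {w : ℝ × ℝ | (μ, rotInv θ w) ∈ B} :=
    ((measurable_prodMk_left (x := μ)).comp (measurable_rotInv θ)) hBm
  have hint := fibK_lintegral' θ μ hS
  simp only [mem_ofPred_eq, rotInv_proj] at hint
  set g : X2 → ℝ≥0∞ := fun x =>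
    fibK θ (μ, projDir θ x) {z | (μ, rotInv θ (projDir θ x, z)) ∈ B} with hg
  have hgm : Measurable g := by
    have hS' : MeasurableSet {w : (PM × ℝ) × ℝ | (μ, rotInv θ (w.1.2, w.2)) ∈ B} :=
      ((measurable_snd.comp measurable_fst).prodMk measurable_snd) hS
    exact (measurable_fibK_slice θ hS').comp
      (measurable_const.prodMk (measurable_projDir θ))
  refine ⟨{x | ENNReal.ofReal (ε / 2) ≤ g x}ᶜ, ofReal_lt_measure_compl hε1 ?_, ?_⟩
  · have h := mul_meas_ge_le_lintegral₀ (μ := (μ : Measure X2)) hgm.aemeasurable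
      (ENNReal.ofReal (ε / 2))
    rw [hint] at h
    exact (ENNReal.mul_lt_mul_iff_right hε20 ENNReal.ofReal_ne_top).1 (h.trans_lt hμ)
  intro x hx
  simp only [mem_compl_iff, mem_ofPred_eq, not_le] at hx
  refine hm l n _ _ hn hx fun z hz => ?_
  have h := hB _ hz n hn
  -- Recentring at the point with fibre coordinate `z` is a translation of the fibre measure.
  have e : ∀ r : ℝ, cenK θ (μ, rotInv θ (projDir θ x, z)) (Icc (-r) r) =
      fibK θ (μ, projDir θ x) (Icc (z - r) (z + r)) := by
    intro r
    rw [cenK_apply _ _ measurableSet_Icc]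
    simp only [projDir_rotInv, projPerp_rotInv]
    congr 1
    ext w
    simp only [mem_ofPred_eq, mem_Icc]
    constructor <;> rintro ⟨h1, h2⟩ <;> constructor <;> linarith
  simp only [e] at h
  exact h

end

/-- if `dim πQ = dim Q - κ` with `κ > 0`, then for most `μ` and most `x`, the
fiber conditional measures of `μ`, viewed on `ℝ`, are `(n, l₀, ε)`-dyadic spreading. -/
theorem stmt12 (Q : Measure (ProbabilityMeasure (Fin 2 → ℝ) × (Fin 2 → ℝ)))
    (hQ : IsCPDist Q) (herg : CPErgodic Q) (θ : ℝ) (α β κ : ℝ) (hκ : 0 < κ)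
    (hα : ∀ᵐ p ∂Q, ExactDim (p.1 : Measure (Fin 2 → ℝ)) α)
    (hβ : ∀ᵐ p ∂Q, ExactDim ((p.1 : Measure (Fin 2 → ℝ)).map (projDir θ)) β)
    (hβκ : β = α - κ) :
    ∀ ε : ℝ, 0 < ε →
      ∃ A : Set (ProbabilityMeasure (Fin 2 → ℝ)), MeasurableSet A ∧
        ENNReal.ofReal (1 - ε) < Q.map Prod.fst A ∧
        ∃ n0 l0 : ℕ, ∀ μ ∈ A,
          ∃ cond : ℝ → Measure (Fin 2 → ℝ),
            IsDisint (μ : Measure (Fin 2 → ℝ)) θ cond ∧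
              ∀ n : ℕ, n0 ≤ n →
                ∃ D : Set (Fin 2 → ℝ),
                  ENNReal.ofReal (1 - ε) < (μ : Measure (Fin 2 → ℝ)) D ∧
                    ∀ x ∈ D,
                      DyadicSpreading ((cond (projDir θ x)).map (projPerp θ)) n l0 ε := by
  intro ε hε
  rcases atom_zero_or_one hQ herg θ with hatom | hatom
  swap
  · exact (not_dirac hQ hκ hα hβ hβκ hatom).elim
  have hle : min ε 1 ≤ ε := min_le_left _ _
  have hof : ENNReal.ofReal (1 - ε) ≤ ENNReal.ofReal (1 - min ε 1) :=
    ENNReal.ofReal_le_ofReal (by linarith)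
  obtain ⟨A, hA, hAQ, l0, h⟩ :=
    spreading_of_no_atom hQ θ hatom (lt_min hε one_pos) (min_le_right ε 1)
  refine ⟨A, hA, hof.trans_lt hAQ, 1, l0, fun μ hμ => ⟨_, isDisint_fibK θ μ, fun n hn => ?_⟩⟩
  obtain ⟨D, hD, hDx⟩ := h μ hμ n hn
  refine ⟨D, hof.trans_lt hD, fun x hx => ?_⟩
  rw [map_projPerp_fib]
  exact (hDx x hx).mono hle

end
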